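/- (Prolate spheroidal double layer potential, on-surface evaluation.) Fix a > 0, u₀ > 1, and integers n ≥ 0, 0 ≤ m ≤ n. Let the density be μ(s,t) = Y_n^m(s,t). Then for every on-surface target point x = Φ(u₀,v,φ) with v ∈ (−1,1), φ ∈ ℝ, the double layer integral D[μ](x) converges absolutely and equals ((n−m)!/(n+m)!)·(−1)^m·(u₀^2−1)·(1/2)·[(P_n^m)′(u₀)·Q_n^m(u₀) + (Q_n^m)′(u₀)·P_n^m(u₀)]·Y_n^m(v,φ), i.e. the singular double layer operator acts on the mode Y_n^m as multiplication by the average of the exterior and interior eigenvalues. -/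

import Mathlib

noncomputable section

open Real MeasureTheory

/-- Legendre polynomial via Rodrigues' formula. -/
def legendreP (n : ℕ) (x : ℝ) : ℝ :=
  (1 / (2 ^ n * (n.factorial : ℝ))) * iteratedDeriv n (fun y : ℝ => (y ^ 2 - 1) ^ n) x

/-- Legendre function of the second kind (Neumann's integral), for `x > 1`. -/
def legendreQ (n : ℕ) (x : ℝ) : ℝ :=
  (1 / 2) * ∫ t in (-1 : ℝ)..1, legendreP n t / (x - t)

/-- Associated Legendre function of the first kind, off the cut (`x > 1`). -/
def assocP (n m : ℕ) (x : ℝ) : ℝ :=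
  Real.sqrt (x ^ 2 - 1) ^ m * iteratedDeriv m (legendreP n) x

/-- Associated Legendre function of the second kind, off the cut (`x > 1`). -/
def assocQ (n m : ℕ) (x : ℝ) : ℝ :=
  Real.sqrt (x ^ 2 - 1) ^ m * iteratedDeriv m (legendreQ n) x

/-- Ferrers function of the first kind, on the cut (`-1 ≤ v ≤ 1`). -/
def ferrersP (n m : ℕ) (v : ℝ) : ℝ :=
  Real.sqrt (1 - v ^ 2) ^ m * iteratedDeriv m (legendreP n) v

/-- Prolate spheroidal coordinate map. -/
def prolate (a u v φ : ℝ) : EuclideanSpace ℝ (Fin 3) :=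
  (WithLp.equiv 2 (Fin 3 → ℝ)).symm
    ![a * Real.sqrt (u ^ 2 - 1) * Real.sqrt (1 - v ^ 2) * Real.cos φ,
      a * Real.sqrt (u ^ 2 - 1) * Real.sqrt (1 - v ^ 2) * Real.sin φ,
      a * u * v]

/-- Surface spheroidal (= spherical) harmonic `Y_n^m(v, φ)`. -/
def sphY (n m : ℕ) (v φ : ℝ) : ℂ :=
  ((Real.sqrt ((2 * (n : ℝ) + 1) / (4 * Real.pi)) *
      Real.sqrt (((n - m).factorial : ℝ) / ((n + m).factorial : ℝ)) * ferrersP n m v : ℝ) : ℂ) *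
    Complex.exp (Complex.I * m * φ)

/-- Outward unit normal on the prolate spheroid `u = u₀`, at surface parameters `(s, t)`. -/
def unitNormalP (a u₀ s t : ℝ) : EuclideanSpace ℝ (Fin 3) :=
  ‖deriv (fun w => prolate a w s t) u₀‖⁻¹ • deriv (fun w => prolate a w s t) u₀

/-- Surface area element on the prolate spheroid `u = u₀`. -/
def areaElemP (a u₀ s : ℝ) : ℝ := a ^ 2 * Real.sqrt (u₀ ^ 2 - s ^ 2) * Real.sqrt (u₀ ^ 2 - 1)

/-- Laplace double layer potential on the prolate spheroid `u = u₀`. -/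
def doubleLayerP (a u₀ : ℝ) (μ : ℝ → ℝ → ℂ) (x : EuclideanSpace ℝ (Fin 3)) : ℂ :=
  ∫ t in (0 : ℝ)..(2 * Real.pi), ∫ s in (-1 : ℝ)..1,
    ((((inner ℝ (unitNormalP a u₀ s t) (x - prolate a u₀ s t) : ℝ) /
        (4 * Real.pi * ‖x - prolate a u₀ s t‖ ^ 3)) * areaElemP a u₀ s : ℝ) : ℂ) * μ s t

open Filter Topology

theorem iterDeriv_poly (p : Polynomial ℝ) (k : ℕ) :
    iteratedDeriv k (fun x => p.eval x) = fun x => (Polynomial.derivative^[k] p).eval x := by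
  induction k with
  | zero => simp
  | succ k ih =>
    rw [iteratedDeriv_succ, ih]
    funext x
    rw [Polynomial.deriv, Function.iterate_succ_apply']

/-- the Rodrigues polynomial -/
def rodP (n : ℕ) : Polynomial ℝ := (Polynomial.X ^ 2 - 1) ^ n

/-- Legendre polynomial as a polynomial -/
def legPoly (n : ℕ) : Polynomial ℝ :=
  Polynomial.C (1 / (2 ^ n * (n.factorial : ℝ))) * (Polynomial.derivative^[n] (rodP n))

theorem legendreP_eq (n : ℕ) : legendreP n = fun x => (legPoly n).eval x := by
  funext x
  have : (fun y : ℝ => (y ^ 2 - 1) ^ n) = fun y => (rodP n).eval y := by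
    funext y; simp [rodP]
  rw [legendreP, this, iterDeriv_poly]
  simp [legPoly]

/-- derivatives of Legendre polynomial -/
def legD (n m : ℕ) (x : ℝ) : ℝ := (Polynomial.derivative^[m] (legPoly n)).eval x

theorem legD_eq (n m : ℕ) : iteratedDeriv m (legendreP n) = legD n m := by
  funext x
  rw [legendreP_eq, iterDeriv_poly]; rfl

theorem legD_hasDerivAt (n m : ℕ) (x : ℝ) : HasDerivAt (legD n m) (legD n (m+1) x) x := by
  have := (Polynomial.derivative^[m] (legPoly n)).hasDerivAt x
  rw [← Function.iterate_succ_apply' (Polynomial.derivative)] at this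
  exact this

/-- generic propagation of the ODE by differentiation -/
theorem ode_propagate (f : ℕ → ℝ → ℝ) (s : Set ℝ) (hs : IsOpen s)
    (hf : ∀ m, ∀ x ∈ s, HasDerivAt (f m) (f (m+1) x) x) (b N : ℝ)
    (h0 : ∀ x ∈ s, (x^2-1) * f 2 x + b * x * f 1 x - N * f 0 x = 0) (m : ℕ) :
    ∀ x ∈ s, (x^2-1) * f (m+2) x + (b + 2*m) * x * f (m+1) x
      - (N - m * b - m*(m-1)) * f m x = 0 := by
  induction m with
  | zero => intro x hx; have := h0 x hx; simp; linarith
  | succ k ih =>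
    intro x hx
    have hd : HasDerivAt (fun x => (x^2-1) * f (k+2) x + (b + 2*k) * x * f (k+1) x
      - (N - k * b - k*(k-1)) * f k x)
      ((2 * x) * f (k+2) x + (x^2-1) * f (k+3) x + ((b + 2*k) * f (k+1) x
        + (b + 2*k) * x * f (k+2) x) - (N - k * b - k*(k-1)) * f (k+1) x) x := by
      have h1 : HasDerivAt (fun x : ℝ => x^2-1) (2*x) x := by
        simpa using (hasDerivAt_pow 2 x).sub_const 1
      have h2 : HasDerivAt (fun x : ℝ => (b + 2*k) * x) (b+2*k) x := by
        simpa using (hasDerivAt_id x).const_mul (b+2*(k:ℝ))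
      exact ((h1.mul (hf (k+2) x hx)).add (h2.mul (hf (k+1) x hx))).sub ((hf k x hx).const_mul _)
    have hz : HasDerivAt (fun x => (x^2-1) * f (k+2) x + (b + 2*k) * x * f (k+1) x
      - (N - k * b - k*(k-1)) * f k x) 0 x := by
      refine (hasDerivAt_const x (0:ℝ)).congr_of_eventuallyEq ?_
      filter_upwards [hs.mem_nhds hx] with y hy using ih y hy
    have := hd.unique hz
    push_cast
    linarith

theorem legD_ode (n m : ℕ) (x : ℝ) :
    (x^2-1) * legD n (m+2) x + 2*(m+1) * x * legD n (m+1) x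
      - (n*(n+1) - m*(m+1)) * legD n m x = 0 := by
  let z : ℕ → ℝ → ℝ := fun k x => (Polynomial.derivative^[k] (rodP n)).eval x
  have hz : ∀ k, ∀ x ∈ (Set.univ : Set ℝ), HasDerivAt (z k) (z (k+1) x) x := by
    intro k x _
    have := (Polynomial.derivative^[k] (rodP n)).hasDerivAt x
    simpa [z, Function.iterate_succ_apply'] using this
  have hpol : (Polynomial.X^2 - 1) * Polynomial.derivative (rodP n)
      = Polynomial.C (2 * (n:ℝ)) * Polynomial.X * rodP n := by
    rcases n with _ | n
    · simp [rodP]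
    · simp only [rodP, Polynomial.derivative_pow_succ, Polynomial.derivative_sub,
        Polynomial.derivative_X_pow, Polynomial.derivative_one]
      have h2 : (Polynomial.C 2 : Polynomial ℝ) = 2 := rfl
      simp [h2]
      ring
  have hpol2 := congrArg Polynomial.derivative hpol
  have h0 : ∀ x ∈ (Set.univ : Set ℝ),
      (x^2-1) * z 2 x + (2 - 2*n) * x * z 1 x - (2*n) * z 0 x = 0 := by
    intro x _
    have := congrArg (Polynomial.eval x) hpol2
    simp [Polynomial.derivative_mul] at this
    simp [z]
    linarith
  have key := ode_propagate z Set.univ isOpen_univ hz _ _ h0 (n+m) x (Set.mem_univ _)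
  have hL : ∀ k, legD n k x = (1 / (2 ^ n * (n.factorial : ℝ))) * z (n+k) x := by
    intro k
    simp only [legD, legPoly, z, Polynomial.iterate_derivative_C_mul, Polynomial.eval_C_mul]
    rw [add_comm n k, Function.iterate_add_apply]
  rw [hL, hL, hL]
  push_cast at key
  have e1 : n + (m+2) = n + m + 2 := rfl
  have e2 : n + (m+1) = n + m + 1 := rfl
  rw [e1, e2]
  linear_combination (1 / (2 ^ n * (n.factorial : ℝ))) * key

/-- Taylor-type form -/
def rodY (n : ℕ) : Polynomial ℝ := Polynomial.X ^ n * (Polynomial.X + Polynomial.C 2) ^ n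

theorem legD_shift (n m : ℕ) (x : ℝ) : legD n m x =
    (1 / (2 ^ n * (n.factorial : ℝ))) * (Polynomial.derivative^[n+m] (rodY n)).eval (x - 1) := by
  have h : rodP n = (rodY n).comp (Polynomial.X - Polynomial.C 1) := by
    simp only [rodP, rodY, Polynomial.mul_comp, Polynomial.pow_comp, Polynomial.X_comp,
      Polynomial.add_comp, Polynomial.C_comp, ← mul_pow]
    congr 1
    have : (Polynomial.C 2 : Polynomial ℝ) = 2 := rfl
    rw [this, map_one]; ring
  have hd : ∀ k, Polynomial.derivative^[k] (rodP n) =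
      (Polynomial.derivative^[k] (rodY n)).comp (Polynomial.X - Polynomial.C 1) := by
    intro k
    induction k with
    | zero => simpa using h
    | succ k ih =>
      rw [Function.iterate_succ_apply', ih, Polynomial.derivative_comp,
        Function.iterate_succ_apply']
      simp
  simp only [legD, legPoly, Polynomial.iterate_derivative_C_mul, Polynomial.eval_C_mul]
  rw [← Function.iterate_add_apply, add_comm m n, hd]
  simp

theorem rodY_coeff_nonneg (n k : ℕ) : 0 ≤ (rodY n).coeff k := by
  rw [rodY, Polynomial.coeff_X_pow_mul']
  split_ifs
  · rw [Polynomial.coeff_X_add_C_pow]; positivity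
  · exact le_rfl

theorem legD_pos (n m : ℕ) (hm : m ≤ n) : ∃ c > 0, ∀ x : ℝ, 1 < x →
    0 < legD n m x ∧ (2 ≤ x → c ≤ legD n m x) := by
  set p := Polynomial.derivative^[n+m] (rodY n) with hp
  have hc : ∀ k, 0 ≤ p.coeff k := by
    intro k
    rw [hp, Polynomial.coeff_iterate_derivative]
    exact nsmul_nonneg (rodY_coeff_nonneg _ _) _
  have hlead : 0 < p.coeff (n-m) := by
    rw [hp, Polynomial.coeff_iterate_derivative, rodY, Polynomial.coeff_X_pow_mul']
    have e : n - m + (n + m) = 2 * n := by omega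
    rw [e, if_pos (by omega), Polynomial.coeff_X_add_C_pow]
    have e2 : 2 * n - n = n := by omega
    rw [e2]
    have : 0 < (2*n).descFactorial (n+m) := Nat.descFactorial_pos.2 (by omega)
    simp
    omega
  have hge : ∀ y : ℝ, 0 < y → p.coeff (n-m) * y^(n-m) ≤ p.eval y := by
    intro y hy
    rw [Polynomial.eval_eq_sum, Polynomial.sum]
    refine Finset.single_le_sum (f := fun k => p.coeff k * y^k) (fun k _ => ?_) ?_
    · exact mul_nonneg (hc k) (by positivity)
    · rw [Polynomial.mem_support_iff]; exact hlead.ne'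
  have hk : 0 < (1 / (2 ^ n * (n.factorial : ℝ))) := by positivity
  refine ⟨(1 / (2 ^ n * (n.factorial : ℝ))) * p.coeff (n-m), by positivity, fun x hx => ?_⟩
  have hy : 0 < x - 1 := by linarith
  have h1 := hge _ hy
  rw [legD_shift]
  refine ⟨mul_pos hk (lt_of_lt_of_le (by positivity) h1), fun h2 => ?_⟩
  refine mul_le_mul_of_nonneg_left (le_trans ?_ h1) hk.le
  have : (1:ℝ) ≤ (x-1)^(n-m) := one_le_pow₀ (by linarith)
  nlinarith

theorem legD_one (n : ℕ) : legD n 0 1 = 1 := by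
  rw [legD_shift]
  simp only [add_zero, sub_self]
  rw [← Polynomial.coeff_zero_eq_eval_zero, Polynomial.coeff_iterate_derivative, rodY,
    Polynomial.coeff_X_pow_mul']
  simp [Polynomial.coeff_X_add_C_pow, Nat.descFactorial_self]
  have : (n.factorial : ℝ) ≠ 0 := by positivity
  field_simp


/-- differentiation under the integral over a compact set -/
theorem paramDeriv {α : Type*} [MetricSpace α] [MeasurableSpace α] [BorelSpace α]
    [SecondCountableTopology α] (μ : Measure α) [IsFiniteMeasureOnCompacts μ]
    (K : Set α) (hK : IsCompact K) (U : Set ℝ) (hU : IsOpen U) (F F' : ℝ → α → ℝ)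
    (hF : ContinuousOn (Function.uncurry F) (U ×ˢ K))
    (hF' : ContinuousOn (Function.uncurry F') (U ×ˢ K))
    (hd : ∀ x ∈ U, ∀ a ∈ K, HasDerivAt (fun x => F x a) (F' x a) x) (x₀ : ℝ) (hx : x₀ ∈ U) :
    HasDerivAt (fun x => ∫ a in K, F x a ∂μ) (∫ a in K, F' x₀ a ∂μ) x₀ := by
  obtain ⟨ε, hε, hball⟩ := Metric.isOpen_iff.1 hU x₀ hx
  have hcb : Metric.closedBall x₀ (ε/2) ⊆ U :=
    (Metric.closedBall_subset_ball (by linarith)).trans hball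
  have hcomp : IsCompact (Metric.closedBall x₀ (ε/2) ×ˢ K) :=
    (isCompact_closedBall x₀ (ε/2)).prod hK
  obtain ⟨C, hC⟩ := hcomp.exists_bound_of_continuousOn
    (hF'.mono (Set.prod_mono hcb le_rfl))
  have hcF : ∀ x ∈ U, ContinuousOn (F x) K := fun x hx =>
    hF.comp (f := fun a => (x, a)) (by fun_prop) (fun a ha => ⟨hx, ha⟩)
  have hcF' : ∀ x ∈ U, ContinuousOn (F' x) K := fun x hx =>
    hF'.comp (f := fun a => (x, a)) (by fun_prop) (fun a ha => ⟨hx, ha⟩)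
  have hKm : MeasurableSet K := hK.measurableSet
  refine (hasDerivAt_integral_of_dominated_loc_of_deriv_le (s := Metric.ball x₀ (ε/2))
    (bound := fun _ => C) (F' := F') (Metric.ball_mem_nhds _ (by linarith)) ?_ ?_ ?_ ?_ ?_ ?_).2
  · filter_upwards [hU.mem_nhds hx] with x hx
    exact (hcF x hx).aestronglyMeasurable hKm
  · exact (hcF x₀ hx).integrableOn_compact hK
  · exact (hcF' x₀ hx).aestronglyMeasurable hKm
  · filter_upwards [ae_restrict_mem hKm] with a ha x hx
    exact hC (x, a) ⟨Metric.ball_subset_closedBall hx, ha⟩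
  · have : IsFiniteMeasure (μ.restrict K) := ⟨by simpa using hK.measure_lt_top⟩
    exact integrable_const C
  · filter_upwards [ae_restrict_mem hKm] with a ha x hx
    exact hd x (hcb (Metric.ball_subset_closedBall hx)) a ha

/-- moment integrals -/
def qI (n k : ℕ) (x : ℝ) : ℝ := ∫ t in Set.Icc (-1:ℝ) 1, legD n 0 t * ((x - t)⁻¹)^(k+1)

theorem legD_cont (n m : ℕ) : Continuous (legD n m) :=
  (Polynomial.derivative^[m] (legPoly n)).continuous

theorem qI_hasDerivAt (n k : ℕ) (x : ℝ) (hx : 1 < x) :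
    HasDerivAt (qI n k) (-(k+1) * qI n (k+1) x) x := by
  have h := paramDeriv (volume : Measure ℝ) (Set.Icc (-1:ℝ) 1) isCompact_Icc (Set.Ioi 1) isOpen_Ioi
    (fun x t => legD n 0 t * ((x - t)⁻¹)^(k+1))
    (fun x t => -(k+1) * (legD n 0 t * ((x - t)⁻¹)^(k+1+1))) ?_ ?_ ?_ x hx
  · rw [integral_const_mul] at h
    exact h
  · have := (legD_cont n 0)
    refine ContinuousOn.mul (by fun_prop) (ContinuousOn.pow (ContinuousOn.inv₀ (by fun_prop) ?_) _)
    rintro ⟨x, t⟩ ⟨h1, h2⟩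
    have := h2.2; simp at h1; simp at this ⊢; linarith
  · have := (legD_cont n 0)
    refine ContinuousOn.mul (by fun_prop) (ContinuousOn.mul (by fun_prop)
      (ContinuousOn.pow (ContinuousOn.inv₀ (by fun_prop) ?_) _))
    rintro ⟨x, t⟩ ⟨h1, h2⟩
    have := h2.2; simp at h1; simp at this ⊢; linarith
  · intro x hx t ht
    have hne : x - t ≠ 0 := by have := ht.2; simp at hx; linarith
    have h1 : HasDerivAt (fun x => (x - t)⁻¹) (-1 / (x-t)^2) x :=
      ((hasDerivAt_id x).sub_const t).inv hne
    have h2 := (h1.pow (k+1)).const_mul (legD n 0 t)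
    refine h2.congr_deriv ?_
    simp only [Nat.add_sub_cancel]; push_cast
    rw [div_eq_mul_inv, ← inv_pow]; ring

theorem legendreQ_eq (n : ℕ) (x : ℝ) : legendreQ n x = 1/2 * qI n 0 x := by
  rw [legendreQ, qI, intervalIntegral.integral_of_le (by norm_num), ← integral_Icc_eq_integral_Ioc]
  congr 1
  refine integral_congr_ae (Eventually.of_forall fun t => ?_)
  have := congrFun (legD_eq n 0) t
  simp only [iteratedDeriv_zero] at this
  simp [div_eq_mul_inv, this]

/-- derivatives of Legendre Q -/
def legQ (n k : ℕ) (x : ℝ) : ℝ := 1/2 * ((-1)^k * k.factorial * qI n k x)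

theorem legQ_hasDerivAt (n k : ℕ) (x : ℝ) (hx : 1 < x) :
    HasDerivAt (legQ n k) (legQ n (k+1) x) x := by
  have := ((qI_hasDerivAt n k x hx).const_mul ((-1)^k * (k.factorial:ℝ))).const_mul (1/2)
  refine this.congr_deriv ?_
  simp only [legQ, Nat.factorial_succ]; push_cast; ring

theorem legQ_eq (n k : ℕ) : ∀ x : ℝ, 1 < x → iteratedDeriv k (legendreQ n) x = legQ n k x := by
  induction k with
  | zero => intro x _; simp [legQ, legendreQ_eq]
  | succ k ih =>
    intro x hx
    rw [iteratedDeriv_succ]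
    have : iteratedDeriv k (legendreQ n) =ᶠ[𝓝 x] legQ n k := by
      filter_upwards [isOpen_Ioi.mem_nhds hx] with y hy using ih y hy
    rw [this.deriv_eq, (legQ_hasDerivAt n k x hx).deriv]

theorem icc_cont_integrable {f : ℝ → ℝ} {a b : ℝ} (hf : ContinuousOn f (Set.Icc a b)) :
    IntegrableOn f (Set.Icc a b) := hf.integrableOn_compact isCompact_Icc

theorem inv_contOn (x : ℝ) (hx : 1 < x) :
    ContinuousOn (fun t => (x - t)⁻¹) (Set.Icc (-1:ℝ) 1) := by
  refine ContinuousOn.inv₀ (by fun_prop) ?_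
  intro t ht; have := ht.2; linarith

theorem legQ_ode0 (n : ℕ) (x : ℝ) (hx : 1 < x) :
    (x^2-1) * legQ n 2 x + 2 * x * legQ n 1 x - (n*(n+1)) * legQ n 0 x = 0 := by
  have hI : ∀ k, IntegrableOn (fun t => legD n 0 t * ((x - t)⁻¹)^(k+1)) (Set.Icc (-1:ℝ) 1) := by
    intro k
    exact icc_cont_integrable ((legD_cont n 0).continuousOn.mul ((inv_contOn x hx).pow _))
  have hderiv : ∀ t ∈ Set.uIcc (-1:ℝ) 1, HasDerivAt
      (fun t => (t^2-1) * (legD n 0 t * ((x - t)⁻¹)^2 - legD n 1 t * (x-t)⁻¹))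
      (2*(x^2-1)*(legD n 0 t * ((x - t)⁻¹)^3) - 2*x*(legD n 0 t * ((x - t)⁻¹)^2)
        - n*(n+1) * (legD n 0 t * ((x - t)⁻¹)^1)) t := by
    intro t ht
    rw [Set.uIcc_of_le (by norm_num)] at ht
    have hne : x - t ≠ 0 := by have := ht.2; linarith
    have h1 : HasDerivAt (fun t => (x - t)⁻¹) (- -1 / (x-t)^2) t :=
      ((hasDerivAt_id t).const_sub x).inv hne
    have h0 : HasDerivAt (fun x : ℝ => x^2-1) (2*t) t := by
      simpa using (hasDerivAt_pow 2 t).sub_const 1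
    have := h0.mul (((legD_hasDerivAt n 0 t).mul (h1.pow 2)).sub ((legD_hasDerivAt n 1 t).mul h1))
    refine this.congr_deriv ?_
    have ode := legD_ode n 0 t
    simp at ode ⊢
    have ode2 : (t^2-1) * legD n 2 t = n*(n+1) * legD n 0 t - 2*t*legD n 1 t := by linarith
    field_simp
    linear_combination (-1)*(x-t)^2 * ode2
  have hft := intervalIntegral.integral_eq_sub_of_hasDerivAt hderiv (by
    refine ContinuousOn.intervalIntegrable ?_
    rw [Set.uIcc_of_le (by norm_num)]
    have h1 := inv_contOn x hx
    have h2 := (legD_cont n 0).continuousOn (s := Set.Icc (-1:ℝ) 1)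
    fun_prop)
  rw [intervalIntegral.integral_of_le (by norm_num), ← integral_Icc_eq_integral_Ioc,
    integral_sub, integral_sub, integral_const_mul, integral_const_mul, integral_const_mul] at hft
  · norm_num at hft
    simp [legQ, qI]
    linarith
  · exact (hI 2).const_mul _
  · exact (hI 1).const_mul _
  · exact ((hI 2).const_mul _).sub ((hI 1).const_mul _)
  · exact (hI 0).const_mul _

theorem legQ_ode (n m : ℕ) (x : ℝ) (hx : 1 < x) :
    (x^2-1) * legQ n (m+2) x + 2*(m+1) * x * legQ n (m+1) x
      - (n*(n+1) - m*(m+1)) * legQ n m x = 0 := by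
  have := ode_propagate (legQ n) (Set.Ioi 1) isOpen_Ioi (fun m x hx => legQ_hasDerivAt n m x hx)
    2 (n*(n+1)) (fun x hx => legQ_ode0 n x hx) m x hx
  linear_combination this

/-- decay of the derivatives of Q -/
theorem legQ_tendsto (n k : ℕ) : Tendsto (legQ n k) atTop (𝓝 0) := by
  obtain ⟨C, hC⟩ := (isCompact_Icc (a := (-1:ℝ)) (b := 1)).exists_bound_of_continuousOn
    (legD_cont n 0).continuousOn
  have hq : Tendsto (qI n k) atTop (𝓝 0) := by
    have hlim : Tendsto (fun x : ℝ => C * (x-1)⁻¹ * 2) atTop (𝓝 0) := by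
      have h1 : Tendsto (fun x : ℝ => x - 1) atTop atTop := tendsto_atTop_add_const_right _ _ tendsto_id
      have h2 := (tendsto_inv_atTop_zero.comp h1).const_mul C |>.mul_const 2
      simpa using h2
    refine squeeze_zero_norm' ?_ hlim
    filter_upwards [eventually_ge_atTop 2] with x hx
    have := norm_setIntegral_le_of_norm_le_const (μ := volume) (s := Set.Icc (-1:ℝ) 1)
      (f := fun t => legD n 0 t * ((x - t)⁻¹)^(k+1)) (C := C * (x-1)⁻¹) (by simp) ?_
    · refine this.trans (le_of_eq ?_)
      simp [measureReal_def]; norm_num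
    · intro t ht
      have h1 : 0 < x - t := by linarith [ht.2]
      have h3 : (x-t)⁻¹ ≤ (x-1)⁻¹ := inv_anti₀ (by linarith) (by linarith [ht.2])
      have h4 : (x-t)⁻¹ ≤ 1 := inv_le_one_of_one_le₀ (by linarith [ht.2])
      have h5 : 0 < (x-t)⁻¹ := inv_pos.2 h1
      rw [norm_mul, norm_pow, Real.norm_of_nonneg h5.le]
      refine mul_le_mul (hC t ht) ?_ (by positivity) ((norm_nonneg _).trans (hC t ht))
      rw [pow_succ]
      have : (x-t)⁻¹^k ≤ 1 := pow_le_one₀ h5.le h4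
      nlinarith
  have := (hq.const_mul ((-1)^k * (k.factorial:ℝ))).const_mul (1/2)
  simp only [mul_zero] at this
  exact this

theorem eps_int (x : ℝ) (hx : 1 < x) :
    ∫ t in Set.Icc (-1:ℝ) 1, (x-t)⁻¹ = Real.log (x+1) - Real.log (x-1) := by
  have hd : ∀ t ∈ Set.uIcc (-1:ℝ) 1, HasDerivAt (fun t => - Real.log (x - t)) ((x-t)⁻¹) t := by
    intro t ht
    rw [Set.uIcc_of_le (by norm_num)] at ht
    have hne : x - t ≠ 0 := by have := ht.2; linarith
    have := (((hasDerivAt_id t).const_sub x).log hne).neg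
    refine this.congr_deriv ?_
    simp [neg_div]
  have := intervalIntegral.integral_eq_sub_of_hasDerivAt hd (by
    refine ContinuousOn.intervalIntegrable ?_
    rw [Set.uIcc_of_le (by norm_num)]
    exact inv_contOn x hx)
  rw [integral_Icc_eq_integral_Ioc, ← intervalIntegral.integral_of_le (by norm_num), this]
  simp; ring

theorem small_int (g : ℝ → ℝ) (hg : Continuous g) :
    Tendsto (fun x => (x^2-1) * ∫ t in Set.Icc (-1:ℝ) 1, g t * (x-t)⁻¹) (𝓝[>] 1) (𝓝 0) := by
  obtain ⟨C, hC⟩ := (isCompact_Icc (a := (-1:ℝ)) (b := 1)).exists_bound_of_continuousOn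
    hg.continuousOn
  have hlim : Tendsto (fun x : ℝ => C * ((x+1) * ((x-1) * Real.log (x+1)
      - (x-1) * Real.log (x-1)))) (𝓝[>] 1) (𝓝 0) := by
    have hc : ContinuousAt (fun x : ℝ => C * ((x+1) * ((x-1) * Real.log (x+1)
      - (x-1) * Real.log (x-1)))) 1 := by
      have h1 : Continuous (fun x : ℝ => (x-1) * Real.log (x-1)) :=
        Real.continuous_mul_log.comp (by fun_prop : Continuous (fun x : ℝ => x - 1))
      have h2 : ContinuousAt (fun x : ℝ => Real.log (x+1)) 1 :=
        ContinuousAt.log (by fun_prop) (by norm_num)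
      have h3 := h1.continuousAt (x := 1)
      fun_prop
    have := hc.tendsto.mono_left (nhdsWithin_le_nhds (s := Set.Ioi 1))
    simpa using this
  refine squeeze_zero_norm' ?_ hlim
  filter_upwards [self_mem_nhdsWithin] with x hx
  have hx : 1 < x := hx
  have hle : ‖∫ t in Set.Icc (-1:ℝ) 1, g t * (x-t)⁻¹‖ ≤ ∫ t in Set.Icc (-1:ℝ) 1, C * (x-t)⁻¹ := by
    refine norm_integral_le_of_norm_le ((icc_cont_integrable (inv_contOn x hx)).const_mul C) ?_
    filter_upwards [ae_restrict_mem measurableSet_Icc] with t ht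
    have h5 : 0 < (x-t)⁻¹ := inv_pos.2 (by linarith [ht.2])
    rw [norm_mul, Real.norm_of_nonneg h5.le]
    exact mul_le_mul_of_nonneg_right (hC t ht) h5.le
  rw [integral_const_mul, eps_int x hx] at hle
  have hp : 0 < x^2-1 := by nlinarith
  rw [norm_mul, Real.norm_of_nonneg hp.le]
  calc _ ≤ (x^2-1) * (C * (Real.log (x+1) - Real.log (x-1))) :=
        mul_le_mul_of_nonneg_left hle hp.le
    _ = _ := by ring

theorem legQ_one_formula (n : ℕ) (x : ℝ) (hx : 1 < x) :
    legQ n 1 x = -1/2 * (legD n 0 1 * (x-1)⁻¹ - legD n 0 (-1) * (x+1)⁻¹)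
      + 1/2 * ∫ t in Set.Icc (-1:ℝ) 1, legD n 1 t * (x-t)⁻¹ := by
  have hderiv : ∀ t ∈ Set.uIcc (-1:ℝ) 1, HasDerivAt
      (fun t => legD n 0 t * (x - t)⁻¹)
      (legD n 1 t * (x-t)⁻¹ + legD n 0 t * ((x - t)⁻¹)^2) t := by
    intro t ht
    rw [Set.uIcc_of_le (by norm_num)] at ht
    have hne : x - t ≠ 0 := by have := ht.2; linarith
    have h1 : HasDerivAt (fun t => (x - t)⁻¹) (- -1 / (x-t)^2) t :=
      ((hasDerivAt_id t).const_sub x).inv hne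
    have := (legD_hasDerivAt n 0 t).mul h1
    refine this.congr_deriv ?_
    field_simp
  have h1 := inv_contOn x hx
  have h2 := (legD_cont n 0).continuousOn (s := Set.Icc (-1:ℝ) 1)
  have h3 := (legD_cont n 1).continuousOn (s := Set.Icc (-1:ℝ) 1)
  have hft := intervalIntegral.integral_eq_sub_of_hasDerivAt hderiv (by
    refine ContinuousOn.intervalIntegrable ?_
    rw [Set.uIcc_of_le (by norm_num)]
    fun_prop)
  rw [intervalIntegral.integral_of_le (by norm_num), ← integral_Icc_eq_integral_Ioc,
    integral_add (icc_cont_integrable (by fun_prop)) (icc_cont_integrable (by fun_prop))] at hft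
  have e : x - -1 = x + 1 := by ring
  rw [e] at hft
  simp only [legQ, qI, Nat.factorial_one, Nat.cast_one, pow_one, Nat.reduceAdd]
  linarith

theorem wronsk0 (n : ℕ) (x : ℝ) (hx : 1 < x) :
    (x^2-1) * (legD n 0 x * legQ n 1 x - legD n 1 x * legQ n 0 x) = -1 := by
  set w : ℝ → ℝ := fun x => (x^2-1) * (legD n 0 x * legQ n 1 x - legD n 1 x * legQ n 0 x) with hw
  have hd : ∀ y ∈ Set.Ioi (1:ℝ), HasDerivAt w 0 y := by
    intro y hy
    have h0 : HasDerivAt (fun x : ℝ => x^2-1) (2*y) y := by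
      simpa using (hasDerivAt_pow 2 y).sub_const 1
    have := h0.mul (((legD_hasDerivAt n 0 y).mul (legQ_hasDerivAt n 1 y hy)).sub
      ((legD_hasDerivAt n 1 y).mul (legQ_hasDerivAt n 0 y hy)))
    refine this.congr_deriv ?_
    have o1 := legD_ode n 0 y
    have o2 := legQ_ode n 0 y hy
    simp at o1 o2 ⊢
    linear_combination -legQ n 0 y * o1 + legD n 0 y * o2
  have hconst : ∀ y ∈ Set.Ioi (1:ℝ), w y = w x := by
    intro y hy
    refine (convex_Ioi (1:ℝ)).is_const_of_fderivWithin_eq_zero (𝕜 := ℝ) (fun z hz =>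
      ((hd z hz).differentiableAt).differentiableWithinAt) (fun z hz => ?_) hy hx
    rw [fderivWithin_of_isOpen isOpen_Ioi hz]
    have := (hd z hz).hasFDerivAt.fderiv
    rw [this]; ext; simp
  have hlim : Tendsto w (𝓝[>] 1) (𝓝 (-1)) := by
    have e1 := small_int (legD n 1) (legD_cont n 1)
    have e0 := small_int (legD n 0) (legD_cont n 0)
    have c0 : Tendsto (legD n 0) (𝓝[>] 1) (𝓝 1) := by
      have := (legD_cont n 0).tendsto 1
      rw [legD_one] at this
      exact this.mono_left nhdsWithin_le_nhds
    have c1 : Tendsto (legD n 1) (𝓝[>] 1) (𝓝 (legD n 1 1)) :=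
      ((legD_cont n 1).tendsto 1).mono_left nhdsWithin_le_nhds
    have cx : Tendsto (fun x : ℝ => x) (𝓝[>] 1) (𝓝 1) := tendsto_id.mono_left nhdsWithin_le_nhds
    have big := (c0.mul ((((cx.add_const 1).mul_const (legD n 0 1)).sub
      ((cx.sub_const 1).mul_const (legD n 0 (-1)))).const_mul (-1/2) |>.add (e1.const_mul (1/2)))).sub
      ((c1.mul e0).const_mul (1/2))
    rw [legD_one] at big
    norm_num at big
    refine big.congr' ?_
    filter_upwards [self_mem_nhdsWithin] with y hy
    have hy : 1 < y := hy
    simp only [hw]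
    rw [legQ_one_formula n y hy, legD_one]
    have hq0 : legQ n 0 y = 1/2 * ∫ t in Set.Icc (-1:ℝ) 1, legD n 0 t * (y-t)⁻¹ := by
      simp [legQ, qI]
    rw [hq0]
    have a1 : y - 1 ≠ 0 := by linarith
    have a2 : y + 1 ≠ 0 := by linarith
    field_simp
    ring
  have hlim2 : Tendsto w (𝓝[>] 1) (𝓝 (w x)) := by
    refine tendsto_const_nhds.congr' ?_
    filter_upwards [self_mem_nhdsWithin] with y hy
    exact (hconst y hy).symm
  exact tendsto_nhds_unique hlim2 hlim

theorem wronsk (n m : ℕ) (hm : m ≤ n) (x : ℝ) (hx : 1 < x) :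
    (((n-m).factorial : ℝ) / (n+m).factorial) * (-1)^m *
      ((x^2-1)^(m+1) * (legD n m x * legQ n (m+1) x - legD n (m+1) x * legQ n m x)) = -1 := by
  induction m with
  | zero =>
    have h := wronsk0 n x hx
    have : (n.factorial : ℝ) ≠ 0 := by positivity
    simp
    rw [div_self this, one_mul]
    exact h
  | succ k ih =>
    have ih := ih (by omega)
    have o1 := legD_ode n k x
    have o2 := legQ_ode n k x hx
    refine Eq.trans ?_ ih
    obtain ⟨j, rfl⟩ : ∃ j, n = j + (k+1) := ⟨n - (k+1), by omega⟩
    have e1 : j + (k+1) - k = j + 1 := by omega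
    have e2 : j + (k+1) - (k+1) = j := by omega
    have e3 : j + (k+1) + (k+1) = (j + (k+1) + k) + 1 := by omega
    rw [e1, e2, e3, Nat.factorial_succ, Nat.factorial_succ]
    have f1 : ((j + (k+1) + k).factorial : ℝ) ≠ 0 := by positivity
    push_cast at o1 o2 ⊢
    have f2 : ((j:ℝ) + (k+1) + k + 1) ≠ 0 := by positivity
    field_simp
    have e4 : k + 1 + 1 = k + 2 := rfl
    rw [e4, pow_succ (x^2-1) (k+1), pow_succ (-1:ℝ) k]
    linear_combination (-1)^k * (x^2-1)^(k+1) *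
      (legQ (j+(k+1)) (k+1) x * o1 - legD (j+(k+1)) (k+1) x * o2)


/-- squared distance -/
def dD (X Y Z e θ t : ℝ) : ℝ :=
  (sinh e * sin θ * cos t - X)^2 + (sinh e * sin θ * sin t - Y)^2 + (cosh e * cos θ - Z)^2
/-- first derivative in e -/
def dDe (X Y Z e θ t : ℝ) : ℝ :=
  2*(sinh e * sin θ * cos t - X)*(cosh e * sin θ * cos t)
  + 2*(sinh e * sin θ * sin t - Y)*(cosh e * sin θ * sin t)
  + 2*(cosh e * cos θ - Z)*(sinh e * cos θ)
/-- second derivative in e -/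
def dDee (X Y Z e θ t : ℝ) : ℝ :=
  2*((cosh e * sin θ * cos t)^2 + (cosh e * sin θ * sin t)^2 + (sinh e * cos θ)^2)
  + 2*(sinh e * sin θ * cos t - X)*(sinh e * sin θ * cos t)
  + 2*(sinh e * sin θ * sin t - Y)*(sinh e * sin θ * sin t)
  + 2*(cosh e * cos θ - Z)*(cosh e * cos θ)
/-- first derivative in θ -/
def dDh (X Y Z e θ t : ℝ) : ℝ :=
  2*(sinh e * sin θ * cos t - X)*(sinh e * cos θ * cos t)
  + 2*(sinh e * sin θ * sin t - Y)*(sinh e * cos θ * sin t)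
  - 2*(cosh e * cos θ - Z)*(cosh e * sin θ)
/-- second derivative in θ -/
def dDhh (X Y Z e θ t : ℝ) : ℝ :=
  2*((sinh e * cos θ * cos t)^2 + (sinh e * cos θ * sin t)^2 + (cosh e * sin θ)^2)
  - 2*(sinh e * sin θ * cos t - X)*(sinh e * sin θ * cos t)
  - 2*(sinh e * sin θ * sin t - Y)*(sinh e * sin θ * sin t)
  - 2*(cosh e * cos θ - Z)*(cosh e * cos θ)
/-- first derivative in t -/
def dDt (X Y Z e θ t : ℝ) : ℝ :=
  - 2*(sinh e * sin θ * cos t - X)*(sinh e * sin θ * sin t)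
  + 2*(sinh e * sin θ * sin t - Y)*(sinh e * sin θ * cos t) + 0 * Z
/-- second derivative in t -/
def dDtt (X Y Z e θ t : ℝ) : ℝ :=
  2*((sinh e * sin θ * sin t)^2 + (sinh e * sin θ * cos t)^2)
  - 2*(sinh e * sin θ * cos t - X)*(sinh e * sin θ * cos t)
  - 2*(sinh e * sin θ * sin t - Y)*(sinh e * sin θ * sin t) + 0 * Z

/-- inverse distance -/
def g0 (D : ℝ) : ℝ := (√D)⁻¹
/-- its first derivative -/
def g1 (D D1 : ℝ) : ℝ := -1/2 * (√D)⁻¹^3 * D1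
/-- its second derivative -/
def g2 (D D1 D2 : ℝ) : ℝ := 3/4 * (√D)⁻¹^5 * D1^2 - 1/2 * (√D)⁻¹^3 * D2

theorem g0_deriv {D : ℝ → ℝ} {D1 x : ℝ} (h : HasDerivAt D D1 x) (hp : 0 < D x) :
    HasDerivAt (fun x => g0 (D x)) (g1 (D x) D1) x := by
  have hs : 0 < √(D x) := sqrt_pos.2 hp
  have := (h.sqrt hp.ne').inv hs.ne'
  refine this.congr_deriv ?_
  simp only [g1]
  field_simp

theorem g1_deriv {D D' : ℝ → ℝ} {D2 x : ℝ} (h : HasDerivAt D (D' x) x) (h2 : HasDerivAt D' D2 x)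
    (hp : 0 < D x) :
    HasDerivAt (fun x => g1 (D x) (D' x)) (g2 (D x) (D' x) D2) x := by
  have h1 := g0_deriv h hp
  have := ((h1.pow 3).const_mul (-1/2)).mul h2
  refine this.congr_deriv ?_
  simp only [g1, g0, g2]
  simp
  ring

section derivs
variable (X Y Z e θ t : ℝ)

theorem dD_e : HasDerivAt (fun e => dD X Y Z e θ t) (dDe X Y Z e θ t) e := by
  have h1 := hasDerivAt_sinh e
  have h2 := hasDerivAt_cosh e
  have := (((((h1.mul_const (sin θ)).mul_const (cos t)).sub_const X).pow 2).add
    ((((h1.mul_const (sin θ)).mul_const (sin t)).sub_const Y).pow 2)).add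
    (((h2.mul_const (cos θ)).sub_const Z).pow 2)
  refine this.congr_deriv ?_
  simp [dDe]

theorem dD_ee : HasDerivAt (fun e => dDe X Y Z e θ t) (dDee X Y Z e θ t) e := by
  have h1 := hasDerivAt_sinh e
  have h2 := hasDerivAt_cosh e
  have := ((((((h1.mul_const (sin θ)).mul_const (cos t)).sub_const X).const_mul 2).mul
      ((h2.mul_const (sin θ)).mul_const (cos t))).add
    (((((h1.mul_const (sin θ)).mul_const (sin t)).sub_const Y).const_mul 2).mul
      ((h2.mul_const (sin θ)).mul_const (sin t)))).add
    ((((h2.mul_const (cos θ)).sub_const Z).const_mul 2).mul (h1.mul_const (cos θ)))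
  refine this.congr_deriv ?_
  simp only [dDee]; ring

theorem dD_h : HasDerivAt (fun θ => dD X Y Z e θ t) (dDh X Y Z e θ t) θ := by
  have h1 := (hasDerivAt_sin θ).const_mul (sinh e)
  have h2 := (hasDerivAt_cos θ).const_mul (cosh e)
  have := ((((h1.mul_const (cos t)).sub_const X).pow 2).add
    (((h1.mul_const (sin t)).sub_const Y).pow 2)).add ((h2.sub_const Z).pow 2)
  refine this.congr_deriv ?_
  simp [dDh]; ring

theorem dD_hh : HasDerivAt (fun θ => dDh X Y Z e θ t) (dDhh X Y Z e θ t) θ := by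
  have h1 := (hasDerivAt_sin θ).const_mul (sinh e)
  have h2 := (hasDerivAt_cos θ).const_mul (cosh e)
  have h3 := (hasDerivAt_cos θ).const_mul (sinh e)
  have h4 := (hasDerivAt_sin θ).const_mul (cosh e)
  have := (((((h1.mul_const (cos t)).sub_const X).const_mul 2).mul (h3.mul_const (cos t))).add
    ((((h1.mul_const (sin t)).sub_const Y).const_mul 2).mul (h3.mul_const (sin t)))).sub
    (((h2.sub_const Z).const_mul 2).mul h4)
  refine this.congr_deriv ?_
  simp only [dDhh]; ring

theorem dD_t : HasDerivAt (fun t => dD X Y Z e θ t) (dDt X Y Z e θ t) t := by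
  have h1 := (hasDerivAt_cos t).const_mul (sinh e * sin θ)
  have h2 := (hasDerivAt_sin t).const_mul (sinh e * sin θ)
  have := (((h1.sub_const X).pow 2).add ((h2.sub_const Y).pow 2)).add_const ((cosh e * cos θ - Z)^2)
  refine this.congr_deriv ?_
  simp [dDt]

theorem dD_tt : HasDerivAt (fun t => dDt X Y Z e θ t) (dDtt X Y Z e θ t) t := by
  have h1 := (hasDerivAt_cos t).const_mul (sinh e * sin θ)
  have h2 := (hasDerivAt_sin t).const_mul (sinh e * sin θ)
  have := ((((h1.sub_const X).const_mul (-2)).mul h2).add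
    (((h2.sub_const Y).const_mul 2).mul h1)).add_const (0*Z)
  refine this.congr_deriv ?_
  simp only [dDtt]; ring

theorem g_harm (hp : 0 < dD X Y Z e θ t) :
    (sinh e * sin θ) * (sinh e * sin θ * (g2 (dD X Y Z e θ t) (dDe X Y Z e θ t) (dDee X Y Z e θ t)
      + g2 (dD X Y Z e θ t) (dDh X Y Z e θ t) (dDhh X Y Z e θ t))
    + cosh e * sin θ * g1 (dD X Y Z e θ t) (dDe X Y Z e θ t)
    + sinh e * cos θ * g1 (dD X Y Z e θ t) (dDh X Y Z e θ t))
    + (sinh e^2 + sin θ^2) * g2 (dD X Y Z e θ t) (dDt X Y Z e θ t) (dDtt X Y Z e θ t) = 0 := by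
  have hs : 0 < √(dD X Y Z e θ t) := sqrt_pos.2 hp
  have hr : (√(dD X Y Z e θ t))⁻¹^3 = (√(dD X Y Z e θ t))⁻¹^5 * dD X Y Z e θ t := by
    have := sq_sqrt hp.le
    nth_rewrite 3 [← this]
    field_simp
  simp only [g2, g1, hr]
  generalize (√(dD X Y Z e θ t))⁻¹ = r
  simp only [dD, dDe, dDee, dDh, dDhh, dDt, dDtt]
  have c1 := cosh_sq e
  have c2 := sin_sq_add_cos_sq θ
  have c3 := sin_sq_add_cos_sq t
  generalize cosh e = ch at *
  generalize sinh e = sh at *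
  generalize sin θ = s at *
  generalize cos θ = c at *
  generalize sin t = st at *
  generalize cos t = ct at *
  clear hr hs hp
  have hA : ch^2*s^2 + sh^2*c^2 = sh^2 + s^2 := by
    linear_combination s^2 * c1 + sh^2 * c2
  obtain ⟨a, ha⟩ : ∃ a, a = sh * s * ct - X := ⟨_, rfl⟩
  obtain ⟨b, hb⟩ : ∃ b, b = sh * s * st - Y := ⟨_, rfl⟩
  obtain ⟨z, hz⟩ : ∃ z, z = ch * c - Z := ⟨_, rfl⟩
  rw [← ha, ← hb, ← hz]
  have E1 : (sh*s)^2*((2*a*(ch*s*ct)+2*b*(ch*s*st)+2*z*(sh*c))^2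
      + (2*a*(sh*c*ct)+2*b*(sh*c*st)-2*z*(ch*s))^2)
      + (sh^2+s^2)*(-2*a*(sh*s*st)+2*b*(sh*s*ct)+0*Z)^2
      = 4*(sh^2+s^2)*(sh*s)^2*(a^2+b^2+z^2) := by
    linear_combination 4*(sh*s)^2*((a*ct+b*st)^2+z^2)*hA + 4*(sh*s)^2*(sh^2+s^2)*(a^2+b^2)*c3
  have E2 : (sh*s)*(sh*s*((2*((ch*s*ct)^2+(ch*s*st)^2+(sh*c)^2)+2*a*(sh*s*ct)+2*b*(sh*s*st)
        +2*z*(ch*c))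
      + (2*((sh*c*ct)^2+(sh*c*st)^2+(ch*s)^2)-2*a*(sh*s*ct)-2*b*(sh*s*st)-2*z*(ch*c)))
      + ch*s*(2*a*(ch*s*ct)+2*b*(ch*s*st)+2*z*(sh*c))
      + sh*c*(2*a*(sh*c*ct)+2*b*(sh*c*st)-2*z*(ch*s)))
      + (sh^2+s^2)*(2*((sh*s*st)^2+(sh*s*ct)^2)-2*a*(sh*s*ct)-2*b*(sh*s*st)+0*Z)
      = 6*(sh^2+s^2)*(sh*s)^2 := by
    linear_combination (4*(sh*s)^2 + 2*(sh*s)*(a*ct+b*st))*hA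
      + (2*(sh*s)^2*(ch^2*s^2+sh^2*c^2)+2*(sh*s)^2*(sh^2+s^2))*c3
  linear_combination (3/4*r^5)*E1 - 1/2*r^5*(a^2+b^2+z^2)*E2
end derivs


theorem g0_cont {α : Type*} [TopologicalSpace α] {s : Set α} {D : α → ℝ}
    (hD : ContinuousOn D s) (hp : ∀ a ∈ s, 0 < D a) : ContinuousOn (fun a => g0 (D a)) s := by
  unfold g0
  exact ContinuousOn.inv₀ hD.sqrt (fun a ha => (sqrt_pos.2 (hp a ha)).ne')

theorem g1_cont {α : Type*} [TopologicalSpace α] {s : Set α} {D D1 : α → ℝ}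
    (hD : ContinuousOn D s) (h1 : ContinuousOn D1 s) (hp : ∀ a ∈ s, 0 < D a) :
    ContinuousOn (fun a => g1 (D a) (D1 a)) s := by
  have := g0_cont hD hp
  unfold g0 at this
  unfold g1
  exact (continuousOn_const.mul (this.pow 3)).mul h1

theorem g2_cont {α : Type*} [TopologicalSpace α] {s : Set α} {D D1 D2 : α → ℝ}
    (hD : ContinuousOn D s) (h1 : ContinuousOn D1 s) (h2 : ContinuousOn D2 s)
    (hp : ∀ a ∈ s, 0 < D a) :
    ContinuousOn (fun a => g2 (D a) (D1 a) (D2 a)) s := by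
  have := g0_cont hD hp
  unfold g0 at this
  unfold g2
  exact ((continuousOn_const.mul (this.pow 5)).mul (h1.pow 2)).sub
    ((continuousOn_const.mul (this.pow 3)).mul h2)

/-- the angular box -/
def boxK : Set (ℝ × ℝ) := Set.Icc 0 π ×ˢ Set.Icc 0 (2*π)

theorem boxK_compact : IsCompact boxK := isCompact_Icc.prod isCompact_Icc

theorem box_split (f : ℝ × ℝ → ℝ) (hf : ContinuousOn f boxK) :
    (∫ p in boxK, f p = ∫ θ in Set.Icc 0 π, ∫ t in Set.Icc 0 (2*π), f (θ, t)) ∧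
    (∫ p in boxK, f p = ∫ t in Set.Icc 0 (2*π), ∫ θ in Set.Icc 0 π, f (θ, t)) := by
  have hi : IntegrableOn f boxK := hf.integrableOn_compact boxK_compact
  have hi' : Integrable f ((volume.restrict (Set.Icc 0 π)).prod
      (volume.restrict (Set.Icc 0 (2*π)))) := by
    rw [Measure.prod_restrict]; exact hi
  have e : (volume : Measure (ℝ×ℝ)).restrict boxK = ((volume.restrict (Set.Icc 0 π)).prod
      (volume.restrict (Set.Icc 0 (2*π)))) := by
    rw [Measure.prod_restrict]; rfl
  rw [e]
  exact ⟨integral_prod _ hi', integral_prod_symm _ hi'⟩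

theorem icc_ftc {f f' : ℝ → ℝ} {a b : ℝ} (hab : a ≤ b) (h : ∀ x ∈ Set.Icc a b, HasDerivAt f (f' x) x)
    (hc : ContinuousOn f' (Set.Icc a b)) : ∫ x in Set.Icc a b, f' x = f b - f a := by
  rw [integral_Icc_eq_integral_Ioc, ← intervalIntegral.integral_of_le hab]
  refine intervalIntegral.integral_eq_sub_of_hasDerivAt (fun x hx => h x ?_)
    (ContinuousOn.intervalIntegrable ?_)
  · rwa [Set.uIcc_of_le hab] at hx
  · rwa [Set.uIcc_of_le hab]

section step1
variable (X Y Z : ℝ)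

theorem cD : Continuous (fun p : ℝ × ℝ × ℝ => dD X Y Z p.1 p.2.1 p.2.2) := by
  unfold dD; fun_prop
theorem cDe : Continuous (fun p : ℝ × ℝ × ℝ => dDe X Y Z p.1 p.2.1 p.2.2) := by
  unfold dDe; fun_prop
theorem cDee : Continuous (fun p : ℝ × ℝ × ℝ => dDee X Y Z p.1 p.2.1 p.2.2) := by
  unfold dDee; fun_prop
theorem cDh : Continuous (fun p : ℝ × ℝ × ℝ => dDh X Y Z p.1 p.2.1 p.2.2) := by
  unfold dDh; fun_prop
theorem cDhh : Continuous (fun p : ℝ × ℝ × ℝ => dDhh X Y Z p.1 p.2.1 p.2.2) := by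
  unfold dDhh; fun_prop
theorem cDtt : Continuous (fun p : ℝ × ℝ × ℝ => dDtt X Y Z p.1 p.2.1 p.2.2) := by
  unfold dDtt; fun_prop
theorem cDt : Continuous (fun p : ℝ × ℝ × ℝ => dDt X Y Z p.1 p.2.1 p.2.2) := by
  unfold dDt; fun_prop

variable (η : ℝ) (hD : ∀ e ∈ Set.Ioo (-η) η, ∀ θ t, 0 < dD X Y Z e θ t)
  (S S1 S2 T T1 : ℝ → ℝ) (ℓ μ : ℝ)

/-- zeroth moment -/
def bb0 (e : ℝ) : ℝ := ∫ p in boxK, sin p.1 * S p.1 * T p.2 * g0 (dD X Y Z e p.1 p.2)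
/-- first derivative -/
def bb1 (e : ℝ) : ℝ := ∫ p in boxK, sin p.1 * S p.1 * T p.2 *
  g1 (dD X Y Z e p.1 p.2) (dDe X Y Z e p.1 p.2)
/-- second derivative -/
def bb2 (e : ℝ) : ℝ := ∫ p in boxK, sin p.1 * S p.1 * T p.2 *
  g2 (dD X Y Z e p.1 p.2) (dDe X Y Z e p.1 p.2) (dDee X Y Z e p.1 p.2)

include hD in
theorem bb0_deriv (hS : Continuous S) (hT : Continuous T) (e : ℝ) (he : e ∈ Set.Ioo (-η) η) :
    HasDerivAt (bb0 X Y Z S T) (bb1 X Y Z S T e) e := by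
  refine paramDeriv (volume : Measure (ℝ×ℝ)) boxK boxK_compact (Set.Ioo (-η) η) isOpen_Ioo
    (fun e p => sin p.1 * S p.1 * T p.2 * g0 (dD X Y Z e p.1 p.2))
    (fun e p => sin p.1 * S p.1 * T p.2 * g1 (dD X Y Z e p.1 p.2) (dDe X Y Z e p.1 p.2))
    ?_ ?_ ?_ e he
  · refine ContinuousOn.mul (by fun_prop) (g0_cont (cD X Y Z).continuousOn ?_)
    rintro ⟨e, θ, t⟩ ⟨h, -⟩
    exact hD e h θ t
  · refine ContinuousOn.mul (by fun_prop) (g1_cont (cD X Y Z).continuousOn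
      (cDe X Y Z).continuousOn ?_)
    rintro ⟨e, θ, t⟩ ⟨h, -⟩
    exact hD e h θ t
  · rintro x hx ⟨θ, t⟩ -
    exact (g0_deriv (dD_e X Y Z x θ t) (hD x hx θ t)).const_mul _

include hD in
theorem bb1_deriv (hS : Continuous S) (hT : Continuous T) (e : ℝ) (he : e ∈ Set.Ioo (-η) η) :
    HasDerivAt (bb1 X Y Z S T) (bb2 X Y Z S T e) e := by
  refine paramDeriv (volume : Measure (ℝ×ℝ)) boxK boxK_compact (Set.Ioo (-η) η) isOpen_Ioo
    (fun e p => sin p.1 * S p.1 * T p.2 * g1 (dD X Y Z e p.1 p.2) (dDe X Y Z e p.1 p.2))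
    (fun e p => sin p.1 * S p.1 * T p.2 *
      g2 (dD X Y Z e p.1 p.2) (dDe X Y Z e p.1 p.2) (dDee X Y Z e p.1 p.2))
    ?_ ?_ ?_ e he
  · refine ContinuousOn.mul (by fun_prop) (g1_cont (cD X Y Z).continuousOn
      (cDe X Y Z).continuousOn ?_)
    rintro ⟨e, θ, t⟩ ⟨h, -⟩
    exact hD e h θ t
  · refine ContinuousOn.mul (by fun_prop) (g2_cont (cD X Y Z).continuousOn
      (cDe X Y Z).continuousOn (cDee X Y Z).continuousOn ?_)
    rintro ⟨e, θ, t⟩ ⟨h, -⟩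
    exact hD e h θ t
  · rintro x hx ⟨θ, t⟩ -
    exact (g1_deriv (D' := fun e => dDe X Y Z e θ t) (dD_e X Y Z x θ t) (dD_ee X Y Z x θ t)
      (hD x hx θ t)).const_mul _

include hD in
theorem bb_ode (hS : ∀ x, HasDerivAt S (S1 x) x) (hS1 : ∀ x, HasDerivAt S1 (S2 x) x)
    (hS2 : Continuous S2) (hT : ∀ x, HasDerivAt T (T1 x) x)
    (hT1 : ∀ x, HasDerivAt T1 (-μ * T x) x)
    (hTp : T (2*π) = T 0) (hT1p : T1 (2*π) = T1 0)
    (hSo : ∀ θ ∈ Set.Ioo 0 π, sin θ * (sin θ * S2 θ + cos θ * S1 θ)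
      = (μ - ℓ * sin θ^2) * S θ) (e : ℝ) (he : e ∈ Set.Ioo 0 η) :
    sinh e * (sinh e * bb2 X Y Z S T e + cosh e * bb1 X Y Z S T e)
      = (ℓ * sinh e^2 + μ) * bb0 X Y Z S T e := by
  have he' : e ∈ Set.Ioo (-η) η := ⟨by linarith [he.1, he.2], he.2⟩
  have hsh : 0 < sinh e := sinh_pos_iff.2 he.1
  have hSc : Continuous S := continuous_iff_continuousAt.2 fun x => (hS x).continuousAt
  have hS1c : Continuous S1 := continuous_iff_continuousAt.2 fun x => (hS1 x).continuousAt
  have hTc : Continuous T := continuous_iff_continuousAt.2 fun x => (hT x).continuousAt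
  have hT1c : Continuous T1 := continuous_iff_continuousAt.2 fun x => (hT1 x).continuousAt
  have hpos : ∀ p : ℝ × ℝ, 0 < dD X Y Z e p.1 p.2 := fun p => hD e he' _ _
  have emb : Continuous (fun p : ℝ × ℝ => ((e, p.1, p.2) : ℝ×ℝ×ℝ)) := by fun_prop
  have c0 : Continuous (fun p : ℝ × ℝ => g0 (dD X Y Z e p.1 p.2)) :=
    continuousOn_univ.1 (g0_cont ((cD X Y Z).comp emb).continuousOn (fun p _ => hpos p))
  have ce : Continuous (fun p : ℝ × ℝ => g1 (dD X Y Z e p.1 p.2) (dDe X Y Z e p.1 p.2)) :=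
    continuousOn_univ.1 (g1_cont ((cD X Y Z).comp emb).continuousOn
      ((cDe X Y Z).comp emb).continuousOn (fun p _ => hpos p))
  have ch : Continuous (fun p : ℝ × ℝ => g1 (dD X Y Z e p.1 p.2) (dDh X Y Z e p.1 p.2)) :=
    continuousOn_univ.1 (g1_cont ((cD X Y Z).comp emb).continuousOn
      ((cDh X Y Z).comp emb).continuousOn (fun p _ => hpos p))
  have cee : Continuous (fun p : ℝ × ℝ => g2 (dD X Y Z e p.1 p.2) (dDe X Y Z e p.1 p.2)
      (dDee X Y Z e p.1 p.2)) :=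
    continuousOn_univ.1 (g2_cont ((cD X Y Z).comp emb).continuousOn
      ((cDe X Y Z).comp emb).continuousOn ((cDee X Y Z).comp emb).continuousOn (fun p _ => hpos p))
  have chh : Continuous (fun p : ℝ × ℝ => g2 (dD X Y Z e p.1 p.2) (dDh X Y Z e p.1 p.2)
      (dDhh X Y Z e p.1 p.2)) :=
    continuousOn_univ.1 (g2_cont ((cD X Y Z).comp emb).continuousOn
      ((cDh X Y Z).comp emb).continuousOn ((cDhh X Y Z).comp emb).continuousOn (fun p _ => hpos p))
  have ctt : Continuous (fun p : ℝ × ℝ => g2 (dD X Y Z e p.1 p.2) (dDt X Y Z e p.1 p.2)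
      (dDtt X Y Z e p.1 p.2)) :=
    continuousOn_univ.1 (g2_cont ((cD X Y Z).comp emb).continuousOn
      ((cDt X Y Z).comp emb).continuousOn ((cDtt X Y Z).comp emb).continuousOn (fun p _ => hpos p))
  set G0 : ℝ × ℝ → ℝ := fun p => g0 (dD X Y Z e p.1 p.2) with hG0
  set Ge : ℝ × ℝ → ℝ := fun p => g1 (dD X Y Z e p.1 p.2) (dDe X Y Z e p.1 p.2) with hGe
  set Gh : ℝ × ℝ → ℝ := fun p => g1 (dD X Y Z e p.1 p.2) (dDh X Y Z e p.1 p.2) with hGh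
  set Gt : ℝ × ℝ → ℝ := fun p => g1 (dD X Y Z e p.1 p.2) (dDt X Y Z e p.1 p.2) with hGt
  set Gee : ℝ × ℝ → ℝ := fun p => g2 (dD X Y Z e p.1 p.2) (dDe X Y Z e p.1 p.2)
      (dDee X Y Z e p.1 p.2) with hGee
  set Ghh : ℝ × ℝ → ℝ := fun p => g2 (dD X Y Z e p.1 p.2) (dDh X Y Z e p.1 p.2)
      (dDhh X Y Z e p.1 p.2) with hGhh
  set Gtt : ℝ × ℝ → ℝ := fun p => g2 (dD X Y Z e p.1 p.2) (dDt X Y Z e p.1 p.2)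
      (dDtt X Y Z e p.1 p.2) with hGtt
  set Lf : ℝ × ℝ → ℝ := fun p => sin p.1 * S p.1 * T p.2 *
    (sinh e^2 * Gee p + sinh e * cosh e * Ge p - (ℓ * sinh e^2 + μ) * G0 p) with hL
  set Mf : ℝ × ℝ → ℝ := fun p => sinh e^2 * T p.2 *
    ((cos p.1 * Gh p + sin p.1 * Ghh p) * S p.1
      - G0 p * (cos p.1 * S1 p.1 + sin p.1 * S2 p.1)) with hM
  have cL : Continuous Lf := by fun_prop
  have cM : Continuous Mf := by fun_prop
  have iM : ∫ p in boxK, Mf p = 0 := by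
    rw [(box_split Mf cM.continuousOn).2]
    refine integral_eq_zero_of_ae (Eventually.of_forall fun t => ?_)
    have := icc_ftc (f := fun θ => sinh e^2 * T t * (sin θ * (Gh (θ,t) * S θ - G0 (θ,t) * S1 θ)))
      (f' := fun θ => Mf (θ, t)) (a := 0) (b := π) pi_pos.le ?_ ?_
    · simp only [this]; simp
    · intro θ _
      have d0 : HasDerivAt (fun θ => G0 (θ,t)) (Gh (θ,t)) θ :=
        g0_deriv (dD_h X Y Z e θ t) (hD e he' θ t)
      have d1 : HasDerivAt (fun θ => Gh (θ,t)) (Ghh (θ,t)) θ :=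
        g1_deriv (D' := fun θ => dDh X Y Z e θ t) (dD_h X Y Z e θ t) (dD_hh X Y Z e θ t)
          (hD e he' θ t)
      have := ((hasDerivAt_sin θ).mul ((d1.mul (hS θ)).sub (d0.mul (hS1 θ)))).const_mul
        (sinh e^2 * T t)
      refine this.congr_deriv ?_
      simp only [hM, Pi.mul_apply, Pi.sub_apply]; ring
    · exact (cM.comp (by fun_prop : Continuous fun θ : ℝ => ((θ, t) : ℝ×ℝ))).continuousOn
  have iLM : ∫ p in boxK, (Lf p + Mf p) = 0 := by
    rw [(box_split (fun p => Lf p + Mf p) (cL.add cM).continuousOn).1,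
      integral_Icc_eq_integral_Ioo]
    refine integral_eq_zero_of_ae ?_
    filter_upwards [ae_restrict_mem measurableSet_Ioo] with θ hθ
    have hs : 0 < sin θ := sin_pos_of_mem_Ioo hθ
    have hso := hSo θ hθ
    have key : ∀ t, Lf (θ,t) + Mf (θ,t) =
        -((sin θ)⁻¹ * (sinh e^2 + sin θ^2) * S θ) * (Gtt (θ,t) * T t + μ * G0 (θ,t) * T t) := by
      intro t
      have harm := g_harm X Y Z e θ t (hD e he' θ t)
      change (sinh e * sin θ) * (sinh e * sin θ * (Gee (θ,t) + Ghh (θ,t))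
        + cosh e * sin θ * Ge (θ,t) + sinh e * cos θ * Gh (θ,t))
        + (sinh e^2 + sin θ^2) * Gtt (θ,t) = 0 at harm
      simp only [hL, hM]
      field_simp
      linear_combination S θ * T t * harm - sinh e^2 * T t * G0 (θ,t) * hso
    have := icc_ftc (f := fun t => -((sin θ)⁻¹ * (sinh e^2 + sin θ^2) * S θ) *
      (Gt (θ,t) * T t - G0 (θ,t) * T1 t)) (f' := fun t => Lf (θ,t) + Mf (θ, t)) (a := 0)
      (b := 2*π) two_pi_pos.le ?_ ?_
    · simp only [this]
      have p0 : G0 (θ, 2*π) = G0 (θ, 0) := by simp [hG0, dD]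
      have p1 : Gt (θ, 2*π) = Gt (θ, 0) := by simp [hGt, dD, dDt]
      rw [p0, p1, hTp, hT1p]; simp
    · intro t _
      have d0 : HasDerivAt (fun t => G0 (θ,t)) (Gt (θ,t)) t :=
        g0_deriv (dD_t X Y Z e θ t) (hD e he' θ t)
      have d1 : HasDerivAt (fun t => Gt (θ,t)) (Gtt (θ,t)) t :=
        g1_deriv (D' := fun t => dDt X Y Z e θ t) (dD_t X Y Z e θ t) (dD_tt X Y Z e θ t)
          (hD e he' θ t)
      have := ((d1.mul (hT t)).sub (d0.mul (hT1 t))).const_mul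
        (-((sin θ)⁻¹ * (sinh e^2 + sin θ^2) * S θ))
      refine this.congr_deriv ?_
      rw [key]
      ring
    · exact ((cL.add cM).comp (by fun_prop : Continuous fun t : ℝ => ((θ, t) : ℝ×ℝ))).continuousOn
  have intg : ∀ f : ℝ × ℝ → ℝ, Continuous f → IntegrableOn f boxK := fun f hf =>
    hf.continuousOn.integrableOn_compact boxK_compact
  rw [integral_add (intg _ cL) (intg _ cM), iM, add_zero] at iLM
  have e2 : bb2 X Y Z S T e = ∫ p in boxK, sin p.1 * S p.1 * T p.2 * Gee p := rfl
  have e1 : bb1 X Y Z S T e = ∫ p in boxK, sin p.1 * S p.1 * T p.2 * Ge p := rfl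
  have e0 : bb0 X Y Z S T e = ∫ p in boxK, sin p.1 * S p.1 * T p.2 * G0 p := rfl
  rw [e2, e1, e0]
  have hLs : Lf = fun p => (sinh e^2 * (sin p.1 * S p.1 * T p.2 * Gee p)
      + sinh e * cosh e * (sin p.1 * S p.1 * T p.2 * Ge p))
      - (ℓ * sinh e^2 + μ) * (sin p.1 * S p.1 * T p.2 * G0 p) := by
    funext p; simp only [hL]; ring
  rw [hLs, integral_sub, integral_add, integral_const_mul, integral_const_mul,
    integral_const_mul] at iLM
  · linear_combination iLM
  all_goals exact intg _ (by fun_prop)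

include hD in
/-- off-surface Green identity -/
theorem green_off (hS : ∀ x, HasDerivAt S (S1 x) x) (hS1 : ∀ x, HasDerivAt S1 (S2 x) x)
    (hS2 : Continuous S2) (hT : ∀ x, HasDerivAt T (T1 x) x)
    (hT1 : ∀ x, HasDerivAt T1 (-μ * T x) x)
    (hTp : T (2*π) = T 0) (hT1p : T1 (2*π) = T1 0)
    (hSo : ∀ θ ∈ Set.Ioo 0 π, sin θ * (sin θ * S2 θ + cos θ * S1 θ)
      = (μ - ℓ * sin θ^2) * S θ)
    (P P1 P2 : ℝ → ℝ) (hP : ∀ x, HasDerivAt P (P1 x) x) (hP1 : ∀ x, HasDerivAt P1 (P2 x) x)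
    (hPo : ∀ e, 0 < e → sinh e * (sinh e * P2 e + cosh e * P1 e) = (ℓ * sinh e^2 + μ) * P e)
    (e : ℝ) (he : e ∈ Set.Ioo 0 η) :
    P e * bb1 X Y Z S T e = P1 e * bb0 X Y Z S T e := by
  have hSc : Continuous S := continuous_iff_continuousAt.2 fun x => (hS x).continuousAt
  have hTc : Continuous T := continuous_iff_continuousAt.2 fun x => (hT x).continuousAt
  set I : ℝ → ℝ := fun x => sinh x * (P x * bb1 X Y Z S T x - P1 x * bb0 X Y Z S T x) with hI
  have hd : ∀ x ∈ Set.Ioo (-η) η, HasDerivAt I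
      (cosh x * (P x * bb1 X Y Z S T x - P1 x * bb0 X Y Z S T x)
        + sinh x * (P1 x * bb1 X Y Z S T x + P x * bb2 X Y Z S T x
        - (P2 x * bb0 X Y Z S T x + P1 x * bb1 X Y Z S T x))) x := fun x hx =>
    (hasDerivAt_sinh x).mul (((hP x).mul (bb1_deriv X Y Z η hD S T hSc hTc x hx)).sub
      ((hP1 x).mul (bb0_deriv X Y Z η hD S T hSc hTc x hx)))
  have hz : ∀ x ∈ Set.Ioo 0 η, deriv I x = 0 := by
    intro x hx
    have hx' : x ∈ Set.Ioo (-η) η := ⟨by linarith [hx.1, hx.2], hx.2⟩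
    rw [(hd x hx').deriv]
    have hsh : 0 < sinh x := sinh_pos_iff.2 hx.1
    have o1 := bb_ode X Y Z η hD S S1 S2 T T1 ℓ μ hS hS1 hS2 hT hT1 hTp hT1p hSo x hx
    have o2 := hPo x hx.1
    refine mul_left_cancel₀ hsh.ne' ?_
    linear_combination P x * o1 - bb0 X Y Z S T x * o2
  have h0 : I e = I 0 := by
    have hmem : ∀ x ∈ Set.Icc 0 e, x ∈ Set.Ioo (-η) η := fun x hx =>
      ⟨by linarith [hx.1, he.1, he.2], lt_of_le_of_lt hx.2 he.2⟩
    obtain ⟨c, hc, hc2⟩ := exists_deriv_eq_slope I he.1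
      (fun x hx => (hd x (hmem x hx)).continuousAt.continuousWithinAt)
      (fun x hx => (hd x (hmem x ⟨hx.1.le, hx.2.le⟩)).differentiableAt.differentiableWithinAt)
    rw [hz c ⟨hc.1, hc.2.trans he.2⟩] at hc2
    have := he.1
    field_simp at hc2
    linarith
  have hsh : 0 < sinh e := sinh_pos_iff.2 he.1
  simp only [hI, sinh_zero, zero_mul] at h0
  rcases mul_eq_zero.1 h0 with h | h
  · exact absurd h hsh.ne'
  · linarith
end step1


/-- one minus cosine of the spherical angle -/
def ww (ν φ : ℝ) (p : ℝ × ℝ) : ℝ := 1 - (sin p.1 * sin ν * cos (p.2 - φ) + cos p.1 * cos ν)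

/-- weak one-dimensional singularity -/
def bw (x : ℝ) : ℝ := (√(√(1 - cos x)))⁻¹

theorem ww_cont (ν φ : ℝ) : Continuous (ww ν φ) := by unfold ww; fun_prop

theorem ww_ge1 {ν φ : ℝ} (hν : ν ∈ Set.Ioo 0 π) {p : ℝ × ℝ} (hp : p ∈ boxK) :
    1 - cos (p.1 - ν) ≤ ww ν φ p := by
  have h1 : 0 ≤ sin p.1 := sin_nonneg_of_mem_Icc hp.1
  have h2 : 0 < sin ν := sin_pos_of_mem_Ioo hν
  have h3 := cos_le_one (p.2 - φ)
  rw [cos_sub]; unfold ww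
  nlinarith [mul_nonneg h1 h2.le]

theorem ww_ge3 {ν φ : ℝ} {p : ℝ × ℝ} :
    sin p.1 * sin ν * (1 - cos (p.2 - φ)) ≤ ww ν φ p := by
  have h := cos_le_one (p.1 - ν)
  rw [cos_sub] at h; unfold ww
  nlinarith

theorem ww_ge2 {ν φ : ℝ} (hν : ν ∈ Set.Ioo 0 π) {p : ℝ × ℝ} (hp : p ∈ boxK) :
    (1 - |cos ν|)/2 * (1 - cos (p.2 - φ)) ≤ ww ν φ p := by
  have h1 : 0 ≤ sin p.1 := sin_nonneg_of_mem_Icc hp.1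
  have h2 : 0 < sin ν := sin_pos_of_mem_Ioo hν
  have h3 := cos_le_one (p.2 - φ)
  have h3' := neg_one_le_cos (p.2 - φ)
  have h4 := cos_le_one (p.1 - ν)
  rw [cos_sub] at h4
  have h5 : cos p.1 * cos ν - sin p.1 * sin ν ≤ |cos ν| := by
    have : cos p.1 * cos ν ≤ |cos ν| := by
      refine (le_abs_self _).trans ?_
      rw [abs_mul]
      exact mul_le_of_le_one_left (abs_nonneg _) (abs_cos_le_one _)
    nlinarith [mul_nonneg h1 h2.le]
  unfold ww
  generalize cos (p.2 - φ) = l at *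
  nlinarith [mul_nonneg (sub_nonneg.2 h3) (sub_nonneg.2 h5),
    mul_nonneg (by linarith : 0 ≤ 1 + l) (sub_nonneg.2 h4)]

theorem ww_nonneg {ν φ : ℝ} (hν : ν ∈ Set.Ioo 0 π) {p : ℝ × ℝ} (hp : p ∈ boxK) :
    0 ≤ ww ν φ p := le_trans (by linarith [cos_le_one (p.1 - ν)]) (ww_ge1 hν hp)

theorem abs_cos_lt {ν : ℝ} (hν : ν ∈ Set.Ioo 0 π) : |cos ν| < 1 := by
  have h2 : 0 < sin ν := sin_pos_of_mem_Ioo hν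
  rw [← sq_lt_one_iff_abs_lt_one]
  nlinarith [sin_sq_add_cos_sq ν]

theorem ww_le_two {ν φ : ℝ} (hν : ν ∈ Set.Ioo 0 π) {p : ℝ × ℝ} (hp : p ∈ boxK) :
    ww ν φ p ≤ 2 := by
  have h1 : 0 ≤ sin p.1 := sin_nonneg_of_mem_Icc hp.1
  have h2 : 0 < sin ν := sin_pos_of_mem_Ioo hν
  have h3' := neg_one_le_cos (p.2 - φ)
  have h4 := neg_one_le_cos (p.1 + ν)
  rw [cos_add] at h4
  unfold ww
  nlinarith [mul_nonneg h1 h2.le]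

theorem bw_nonneg (x : ℝ) : 0 ≤ bw x := by unfold bw; positivity

theorem bw_meas : Measurable bw := by unfold bw; fun_prop

theorem bw_int0 : IntervalIntegrable bw volume 0 π := by
  have h := (intervalIntegral.intervalIntegrable_rpow' (a := 0) (b := π)
    (r := -1/2) (by norm_num)).const_mul ((√(√(2/π^2)))⁻¹)
  refine h.mono_fun bw_meas.aestronglyMeasurable ?_
  filter_upwards [ae_restrict_mem measurableSet_uIoc] with x hx
  rw [Set.uIoc_of_le pi_pos.le] at hx
  have hq := cos_le_one_sub_mul_cos_sq (x := x) (by rw [abs_of_pos hx.1]; exact hx.2)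
  rw [norm_of_nonneg (bw_nonneg x), norm_of_nonneg (by have := hx.1; positivity)]
  have e1 : x ^ (-1/2 : ℝ) = (√x)⁻¹ := by
    rw [neg_div, rpow_neg hx.1.le, sqrt_eq_rpow]
  rw [e1, ← mul_inv, ← sqrt_mul (by positivity)]
  unfold bw
  have hx0 := hx.1
  refine inv_anti₀ (by positivity) (sqrt_le_sqrt ?_)
  refine le_sqrt_of_sq_le ?_
  rw [mul_pow, sq_sqrt (by positivity)]
  linarith

theorem bw_int (a b c : ℝ) : IntervalIntegrable (fun x => bw (x - c)) volume a b := by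
  have h1 : IntervalIntegrable bw volume (-π) (-π + 2*π) := by
    have e : -π + 2*π = π := by ring
    rw [e]
    have h2 := (IntervalIntegrable.iff_comp_neg (by simp)).1 bw_int0
    have h3 : (fun x => bw (-x)) = bw := by funext x; simp [bw]
    simp only [h3, neg_zero] at h2
    exact (h2.symm).trans bw_int0
  have hp : Function.Periodic bw (2*π) := fun x => by simp [bw]
  have h2 := hp.intervalIntegrable (by positivity) h1 (a - c) (b - c)
  have := h2.comp_sub_right c
  simpa using this

theorem ae_pos (ν φ : ℝ) : ∀ᵐ p ∂(volume.restrict boxK : Measure (ℝ×ℝ)),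
    0 < 1 - cos (p.1 - ν) ∧ 0 < 1 - cos (p.2 - φ) := by
  have hc : ∀ c : ℝ, Set.Countable {x : ℝ | cos (x - c) = 1} := by
    intro c
    refine (Set.countable_range (fun k : ℤ => (k:ℝ) * (2*π) + c)).mono ?_
    intro x hx
    obtain ⟨k, hk⟩ := (cos_eq_one_iff _).1 hx
    exact ⟨k, by simp only; linarith⟩
  have h1 : ∀ c : ℝ, ∀ᵐ x : ℝ, 0 < 1 - cos (x - c) := by
    intro c
    have := (hc c).ae_notMem volume
    filter_upwards [this] with x hx
    have := lt_of_le_of_ne (cos_le_one (x - c)) hx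
    linarith
  refine ae_restrict_of_ae ?_
  have a1 : ∀ᵐ p ∂(volume : Measure (ℝ×ℝ)), 0 < 1 - cos (p.1 - ν) :=
    Measure.quasiMeasurePreserving_fst.ae (h1 ν)
  have a2 : ∀ᵐ p ∂(volume : Measure (ℝ×ℝ)), 0 < 1 - cos (p.2 - φ) :=
    Measure.quasiMeasurePreserving_snd.ae (h1 φ)
  exact a1.and a2

theorem ae_ww (ν φ : ℝ) (hν : ν ∈ Set.Ioo 0 π) : ∀ᵐ p ∂(volume.restrict boxK : Measure (ℝ×ℝ)),
    p ∈ boxK ∧ 0 < ww ν φ p := by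
  filter_upwards [ae_pos ν φ, ae_restrict_mem boxK_compact.measurableSet] with p h hp
  exact ⟨hp, h.1.trans_le (ww_ge1 hν hp)⟩

theorem wi_int (ν φ : ℝ) (hν : ν ∈ Set.Ioo 0 π) :
    IntegrableOn (fun p => (√(ww ν φ p))⁻¹) boxK := by
  have i1 : Integrable (fun x => bw (x - ν)) (volume.restrict (Set.Icc 0 π)) := by
    have := (intervalIntegrable_iff_integrableOn_Icc_of_le pi_pos.le).1 (bw_int 0 π ν)
    exact this
  have i2 : Integrable (fun x => bw (x - φ)) (volume.restrict (Set.Icc 0 (2*π))) := by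
    have := (intervalIntegrable_iff_integrableOn_Icc_of_le two_pi_pos.le).1 (bw_int 0 (2*π) φ)
    exact this
  have i3 := i1.mul_prod i2
  rw [Measure.prod_restrict] at i3
  have hk : 0 < (1 - |cos ν|)/2 := by linarith [abs_cos_lt hν]
  have i4 := i3.const_mul ((√(√((1 - |cos ν|)/2)))⁻¹)
  refine Integrable.mono' i4 ?_ ?_
  · have := (ww_cont ν φ).measurable
    exact (this.sqrt.inv).aestronglyMeasurable
  · filter_upwards [ae_pos ν φ, ae_restrict_mem boxK_compact.measurableSet] with p h hp
    rw [norm_of_nonneg (by positivity)]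
    unfold bw
    rw [← mul_inv, ← mul_inv, ← sqrt_mul (by positivity), ← sqrt_mul (by positivity),
      ← sqrt_mul (by linarith [h.1]), ← sqrt_mul (by linarith)]
    have h1 := h.1
    have h2 := h.2
    refine inv_anti₀ (by positivity) (sqrt_le_sqrt ?_)
    refine sqrt_le_iff.2 ⟨ww_nonneg hν hp, ?_⟩
    have g1 := ww_ge1 (φ := φ) hν hp
    have g2 := ww_ge2 (φ := φ) hν hp
    calc _ = (1 - cos (p.1 - ν)) * ((1 - |cos ν|)/2 * (1 - cos (p.2 - φ))) := by ring
      _ ≤ ww ν φ p * ww ν φ p := mul_le_mul g1 g2 (by positivity) (ww_nonneg hν hp)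
      _ = _ := by ring


theorem g0_bd {k w D : ℝ} (hk : 0 < k) (hw : 0 < w) (h : k * w ≤ D) :
    |g0 D| ≤ (√k)⁻¹ * (√w)⁻¹ := by
  unfold g0
  rw [abs_of_nonneg (by positivity), ← mul_inv, ← sqrt_mul hk.le]
  exact inv_anti₀ (by positivity) (sqrt_le_sqrt h)

theorem g1_bd {k w D D1 c : ℝ} (hk : 0 < k) (hw : 0 < w) (h : k * w ≤ D) (h1 : |D1| ≤ c * w) :
    |g1 D D1| ≤ 1/2 * (√k)⁻¹^3 * c * (√w)⁻¹ := by
  have h0 := g0_bd hk hw h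
  have e : |g1 D D1| = 1/2 * |g0 D|^3 * |D1| := by
    unfold g1 g0
    rw [abs_mul, abs_mul, abs_pow, neg_div, abs_neg, abs_of_pos (by norm_num : (0:ℝ) < 1/2)]
  rw [e]
  calc _ ≤ 1/2 * ((√k)⁻¹ * (√w)⁻¹)^3 * (c * w) := by gcongr
    _ = 1/2 * (√k)⁻¹^3 * c * (√w)⁻¹ * ((√w)⁻¹^2 * w) := by ring
    _ = _ := by
      have : (√w)⁻¹^2 * w = 1 := by rw [inv_pow, sq_sqrt hw.le, inv_mul_cancel₀ hw.ne']
      rw [this, mul_one]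

theorem g1_bd2 {k w D D1 c : ℝ} (hk : 0 < k) (hw : 0 < w) (h : k * w ≤ D) (hc : 0 ≤ c)
    (h1 : |D1| ≤ c * √D) :
    |g1 D D1| ≤ 1/2 * c * k⁻¹ * w⁻¹ := by
  have hD : 0 < D := lt_of_lt_of_le (by positivity) h
  have e : |g1 D D1| = 1/2 * |g0 D|^3 * |D1| := by
    unfold g1 g0
    rw [abs_mul, abs_mul, abs_pow, neg_div, abs_neg, abs_of_pos (by norm_num : (0:ℝ) < 1/2)]
  have hs := sqrt_pos.2 hD
  rw [e]
  calc _ ≤ 1/2 * |g0 D|^3 * (c * √D) := by gcongr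
    _ = 1/2 * c * D⁻¹ := by
      unfold g0
      rw [abs_of_nonneg (by positivity)]
      nth_rewrite 3 [← sq_sqrt hD.le]
      field_simp
    _ ≤ 1/2 * c * (k*w)⁻¹ := by gcongr
    _ = _ := by rw [mul_inv]; ring

/-- on-surface squared distance -/
def rr (ν φ η : ℝ) (p : ℝ × ℝ) : ℝ := 2 * sinh η^2 * ww ν φ p + (cos p.1 - cos ν)^2

/-- on-surface single layer moment -/
def gam (ν φ : ℝ) (S T : ℝ → ℝ) (η : ℝ) : ℝ :=
  ∫ p in boxK, sin p.1 * S p.1 * T p.2 * g0 (rr ν φ η p)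
/-- derivative of the moment -/
def gam1 (ν φ : ℝ) (S T : ℝ → ℝ) (η : ℝ) : ℝ :=
  ∫ p in boxK, sin p.1 * S p.1 * T p.2 * g1 (rr ν φ η p) (4 * sinh η * cosh η * ww ν φ p)

theorem rr_cont (ν φ η : ℝ) : Continuous (rr ν φ η) := by
  have := ww_cont ν φ
  unfold rr; fun_prop

theorem g0_meas {D : ℝ × ℝ → ℝ} (hD : Continuous D) : Measurable (fun p => g0 (D p)) := by
  have := hD.measurable
  unfold g0; exact this.sqrt.inv

theorem g1_meas {D D1 : ℝ × ℝ → ℝ} (hD : Continuous D) (h1 : Continuous D1) :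
    Measurable (fun p => g1 (D p) (D1 p)) := by
  have := hD.measurable
  have h2 := h1.measurable
  unfold g1; exact ((this.sqrt.inv.pow_const 3).const_mul _).mul h2

theorem st_bd {S T : ℝ → ℝ} (hS : Continuous S) (hT : Continuous T) :
    ∃ M, 0 < M ∧ ∀ p ∈ boxK, |sin p.1 * S p.1 * T p.2| ≤ M := by
  obtain ⟨M, hM⟩ := boxK_compact.exists_bound_of_continuousOn
    (f := fun p : ℝ × ℝ => sin p.1 * S p.1 * T p.2) (by fun_prop)
  exact ⟨max M 1, by positivity, fun p hp => (hM p hp).trans (le_max_left _ _)⟩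

theorem rr_ge (ν φ η : ℝ) (p : ℝ × ℝ) : 2 * sinh η^2 * ww ν φ p ≤ rr ν φ η p := by
  unfold rr; nlinarith [sq_nonneg (cos p.1 - cos ν)]

theorem rr_deriv (ν φ η : ℝ) (p : ℝ × ℝ) :
    HasDerivAt (fun η => rr ν φ η p) (4 * sinh η * cosh η * ww ν φ p) η := by
  have := ((((hasDerivAt_sinh η).pow 2).const_mul 2).mul_const (ww ν φ p)).add_const
    ((cos p.1 - cos ν)^2)
  refine this.congr_deriv ?_
  norm_num; ring_nf; simp

theorem gam0_int {ν φ η : ℝ} (hν : ν ∈ Set.Ioo 0 π) (hη : 0 < η) {S T : ℝ → ℝ}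
    (hS : Continuous S) (hT : Continuous T) :
    IntegrableOn (fun p => sin p.1 * S p.1 * T p.2 * g0 (rr ν φ η p)) boxK := by
  obtain ⟨M, hM, hb⟩ := st_bd hS hT
  refine Integrable.mono' ((wi_int ν φ hν).const_mul (M * (√(2*sinh η^2))⁻¹)) ?_ ?_
  · exact ((by fun_prop : Continuous fun p : ℝ×ℝ => sin p.1 * S p.1 * T p.2).measurable.mul
      (g0_meas (rr_cont ν φ η))).aestronglyMeasurable
  · filter_upwards [ae_ww ν φ hν] with p hp
    have hs : 0 < sinh η := sinh_pos_iff.2 hη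
    rw [norm_mul, norm_eq_abs, norm_eq_abs, mul_assoc M]
    exact mul_le_mul (hb p hp.1) (g0_bd (by positivity) hp.2 (rr_ge ν φ η p)) (abs_nonneg _) hM.le

theorem gam_bound {ν φ : ℝ} (hν : ν ∈ Set.Ioo 0 π) {S T : ℝ → ℝ}
    (hS : Continuous S) (hT : Continuous T) :
    ∃ C, ∀ η, 0 < η → |gam ν φ S T η| ≤ C * (sinh η)⁻¹ := by
  obtain ⟨M, hM, hb⟩ := st_bd hS hT
  refine ⟨M * (√2)⁻¹ * ∫ p in boxK, (√(ww ν φ p))⁻¹, fun η hη => ?_⟩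
  have hs : 0 < sinh η := sinh_pos_iff.2 hη
  have := norm_integral_le_of_norm_le ((wi_int ν φ hν).const_mul (M * (√(2*sinh η^2))⁻¹))
    (f := fun p => sin p.1 * S p.1 * T p.2 * g0 (rr ν φ η p)) (by
    filter_upwards [ae_ww ν φ hν] with p hp
    rw [norm_mul, norm_eq_abs, norm_eq_abs, mul_assoc M]
    exact mul_le_mul (hb p hp.1) (g0_bd (by positivity) hp.2 (rr_ge ν φ η p)) (abs_nonneg _) hM.le)
  rw [integral_const_mul, sqrt_mul (by norm_num), sqrt_sq hs.le] at this
  refine this.trans (le_of_eq ?_)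
  rw [mul_inv]; ring

theorem sinh_tendsto : Tendsto sinh atTop atTop := by
  refine tendsto_atTop_mono' _ ?_ tendsto_id
  filter_upwards [eventually_ge_atTop 0] with x hx
  exact self_le_sinh_iff.2 hx

theorem gam_tendsto {ν φ : ℝ} (hν : ν ∈ Set.Ioo 0 π) {S T : ℝ → ℝ}
    (hS : Continuous S) (hT : Continuous T) : Tendsto (gam ν φ S T) atTop (𝓝 0) := by
  obtain ⟨C, hC⟩ := gam_bound (φ := φ) hν hS hT
  refine squeeze_zero_norm' (a := fun η => C * (sinh η)⁻¹) ?_ ?_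
  · filter_upwards [eventually_gt_atTop 0] with η hη using hC η hη
  · simpa using (tendsto_inv_atTop_zero.comp sinh_tendsto).const_mul C

theorem gam_deriv {ν φ η : ℝ} (hν : ν ∈ Set.Ioo 0 π) (hη : 0 < η) {S T : ℝ → ℝ}
    (hS : Continuous S) (hT : Continuous T) :
    IntegrableOn (fun p => sin p.1 * S p.1 * T p.2 *
      g1 (rr ν φ η p) (4 * sinh η * cosh η * ww ν φ p)) boxK ∧
    HasDerivAt (gam ν φ S T) (gam1 ν φ S T η) η := by
  obtain ⟨M, hM, hb⟩ := st_bd hS hT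
  have hcw := ww_cont ν φ
  have cst : Continuous fun p : ℝ×ℝ => sin p.1 * S p.1 * T p.2 := by fun_prop
  have hs2 : 0 < sinh (η/2) := sinh_pos_iff.2 (by linarith)
  refine hasDerivAt_integral_of_dominated_loc_of_deriv_le (μ := volume.restrict boxK)
    (F := fun η p => sin p.1 * S p.1 * T p.2 * g0 (rr ν φ η p))
    (F' := fun η p => sin p.1 * S p.1 * T p.2 *
      g1 (rr ν φ η p) (4 * sinh η * cosh η * ww ν φ p))
    (s := Set.Ioo (η/2) (2*η))
    (bound := fun p => M * (1/2 * (√(2*sinh (η/2)^2))⁻¹^3 * (4 * sinh (2*η) * cosh (2*η))) *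
      (√(ww ν φ p))⁻¹) (Ioo_mem_nhds (by linarith) (by linarith)) ?_ ?_ ?_ ?_ ?_ ?_
  · exact Eventually.of_forall fun x => (cst.measurable.mul
      (g0_meas (rr_cont ν φ x))).aestronglyMeasurable
  · exact gam0_int hν hη hS hT
  · exact (cst.measurable.mul (g1_meas (rr_cont ν φ η) (by fun_prop))).aestronglyMeasurable
  · filter_upwards [ae_ww ν φ hν] with p hp x hx
    have hx0 : 0 < x := by linarith [hx.1]
    have hsx : 0 < sinh x := sinh_pos_iff.2 hx0
    rw [norm_mul, norm_eq_abs, norm_eq_abs, mul_assoc M]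
    refine mul_le_mul (hb p hp.1) (g1_bd (by positivity) hp.2 ?_ ?_) (abs_nonneg _) hM.le
    · refine le_trans ?_ (rr_ge ν φ x p)
      have : sinh (η/2) ≤ sinh x := sinh_le_sinh.2 hx.1.le
      have := hp.2
      gcongr
    · have := hp.2
      have h1 : sinh x ≤ sinh (2*η) := sinh_le_sinh.2 hx.2.le
      have h2 : cosh x ≤ cosh (2*η) := by
        rw [cosh_le_cosh, abs_of_pos hx0, abs_of_pos (by linarith)]; exact hx.2.le
      have h3 := cosh_pos x
      rw [abs_of_pos (by positivity)]
      gcongr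
  · exact (wi_int ν φ hν).const_mul _
  · filter_upwards [ae_ww ν φ hν] with p hp x hx
    have hx0 : 0 < x := by linarith [hx.1]
    have hsx : 0 < sinh x := sinh_pos_iff.2 hx0
    refine (g0_deriv (rr_deriv ν φ x p) ?_).const_mul _
    have := hp.2
    exact lt_of_lt_of_le (by positivity) (rr_ge ν φ x p)


/-- squared distance to the target -/
def dS (ν φ η e : ℝ) (p : ℝ × ℝ) : ℝ :=
  dD (sinh η * sin ν * cos φ) (sinh η * sin ν * sin φ) (cosh η * cos ν) e p.1 p.2
/-- its derivative -/
def dSe (ν φ η e : ℝ) (p : ℝ × ℝ) : ℝ :=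
  dDe (sinh η * sin ν * cos φ) (sinh η * sin ν * sin φ) (cosh η * cos ν) e p.1 p.2

theorem dS_eq (ν φ η e : ℝ) (p : ℝ × ℝ) : dS ν φ η e p =
    2 * sinh η * sinh e * ww ν φ p + (cosh η - cosh e)^2 + (cos p.1 - cos ν)^2
      + 2 * (cosh (η - e) - 1) * (1 - cos p.1 * cos ν) := by
  unfold dS dD ww
  rw [cosh_sub, cos_sub]
  have c1 := cosh_sq e
  have c2 := cosh_sq η
  have c3 := sin_sq_add_cos_sq p.1
  have c4 := sin_sq_add_cos_sq p.2
  have c5 := sin_sq_add_cos_sq ν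
  have c6 := sin_sq_add_cos_sq φ
  linear_combination (sinh e ^2 * sin p.1^2) * c4 + (sinh η^2 * sin ν^2) * c6 + sinh e^2 * c3
    + sinh η^2 * c5 + (cos p.1^2 - 1) * c1 + (cos ν^2 - 1) * c2

theorem dSe_eq (ν φ η e : ℝ) (p : ℝ × ℝ) : dSe ν φ η e p =
    2 * sinh η * cosh e * ww ν φ p + 2 * (cosh e - cosh η) * sinh e
      + 2 * sinh (e - η) * (1 - cos p.1 * cos ν) := by
  unfold dSe dDe ww
  rw [sinh_sub, cos_sub]
  have c3 := sin_sq_add_cos_sq p.1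
  have c4 := sin_sq_add_cos_sq p.2
  linear_combination (2 * sinh e * cosh e * sin p.1^2) * c4 + 2 * sinh e * cosh e * c3

theorem dS_self (ν φ η : ℝ) (p : ℝ × ℝ) : dS ν φ η η p = rr ν φ η p := by
  rw [dS_eq]; unfold rr; simp only [sub_self, cosh_zero]; ring

theorem dSe_self (ν φ η : ℝ) (p : ℝ × ℝ) :
    dSe ν φ η η p = 2 * sinh η * cosh η * ww ν φ p := by
  rw [dSe_eq]; simp

theorem three_sq {a b z : ℝ} (h : a^2 + b^2 + z^2 ≤ 0) : a = 0 ∧ b = 0 ∧ z = 0 := by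
  have h1 := sq_nonneg a
  have h2 := sq_nonneg b
  have h3 := sq_nonneg z
  exact ⟨(pow_eq_zero_iff two_ne_zero).1 (by linarith), (pow_eq_zero_iff two_ne_zero).1 (by linarith),
    (pow_eq_zero_iff two_ne_zero).1 (by linarith)⟩

theorem dS_pos {ν φ η : ℝ} (hν : ν ∈ Set.Ioo 0 π) : ∀ e ∈ Set.Ioo (-η) η, ∀ θ t,
    0 < dD (sinh η * sin ν * cos φ) (sinh η * sin ν * sin φ) (cosh η * cos ν) e θ t := by
  intro e he θ t
  have hη : 0 < η := by linarith [he.1, he.2]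
  have hA : 0 < sinh η := sinh_pos_iff.2 hη
  have hae : |e| < η := abs_lt.2 he
  have hc : cosh e < cosh η := by rw [cosh_lt_cosh, abs_of_pos hη]; exact hae
  have hce := one_le_cosh e
  have hn : 0 < sin ν := sin_pos_of_mem_Ioo hν
  have c1 := cosh_sq e
  have c2 := cosh_sq η
  have c3 := sin_sq_add_cos_sq θ
  have c4 := sin_sq_add_cos_sq t
  have c5 := sin_sq_add_cos_sq ν
  have c6 := sin_sq_add_cos_sq φ
  by_contra hneg
  have hle := not_lt.1 hneg
  unfold dD at hle
  obtain ⟨a0, b0, z0⟩ := three_sq hle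
  have E1 : sinh e^2 * sin θ^2 = sinh η^2 * sin ν^2 := by
    linear_combination (sinh e * sin θ * cos t + sinh η * sin ν * cos φ) * a0
      + (sinh e * sin θ * sin t + sinh η * sin ν * sin φ) * b0
      - sinh e^2 * sin θ^2 * c4 + sinh η^2 * sin ν^2 * c6
  have E2 : cosh e^2 * cos θ^2 = cosh η^2 * cos ν^2 := by
    linear_combination (cosh e * cos θ + cosh η * cos ν) * z0
  have hu : cosh e^2 < cosh η^2 := by gcongr
  have hA2 : sinh e^2 < sinh η^2 := by linarith
  have hp : 0 < sin θ^2 := by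
    have h1 : 0 < sinh η^2 * sin ν^2 := by positivity
    by_contra h
    have : sin θ^2 = 0 := le_antisymm (not_lt.1 h) (sq_nonneg _)
    rw [this] at E1; linarith
  have h2 : sin ν^2 < sin θ^2 := by
    have : sinh η^2 * sin ν^2 < sinh η^2 * sin θ^2 := by rw [← E1]; gcongr
    exact lt_of_mul_lt_mul_left this (sq_nonneg _)
  have h3 : cos ν^2 ≤ cos θ^2 := by
    have : cosh η^2 * cos ν^2 ≤ cosh η^2 * cos θ^2 := by rw [← E2]; gcongr
    exact le_of_mul_le_mul_left this (by positivity)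
  linarith

theorem dS_ge {ν φ η e : ℝ} (hν : ν ∈ Set.Ioo 0 π) (he : e ∈ Set.Ioo (η/2) η) {p : ℝ × ℝ}
    (hp : p ∈ boxK) : (2 * sinh η * sinh (η/2)) * ww ν φ p ≤ dS ν φ η e p := by
  have hη : 0 < η := by linarith [he.1, he.2]
  have hA : 0 < sinh η := sinh_pos_iff.2 hη
  have h1 : sinh (η/2) ≤ sinh e := sinh_le_sinh.2 he.1.le
  have h2 := ww_nonneg (φ := φ) hν hp
  have h3 := one_le_cosh (η - e)
  have h4 : cos p.1 * cos ν ≤ 1 := by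
    nlinarith [sin_sq_add_cos_sq p.1, sin_sq_add_cos_sq ν, sq_nonneg (cos p.1 - cos ν),
      sq_nonneg (sin p.1), sq_nonneg (sin ν)]
  rw [dS_eq]
  have : 2 * sinh η * sinh (η/2) * ww ν φ p ≤ 2 * sinh η * sinh e * ww ν φ p := by gcongr
  nlinarith [sq_nonneg (cosh η - cosh e), sq_nonneg (cos p.1 - cos ν),
    mul_nonneg (sub_nonneg.2 h3) (sub_nonneg.2 h4)]

theorem dSe_bd {ν φ η : ℝ} (hν : ν ∈ Set.Ioo 0 π) (hη : 0 < η) : ∃ c, 0 ≤ c ∧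
    ∀ e ∈ Set.Ioo (η/2) η, ∀ p ∈ boxK, |dSe ν φ η e p| ≤ c * √(dS ν φ η e p) := by
  have hA : 0 < sinh η := sinh_pos_iff.2 hη
  have hA2 : 0 < sinh (η/2) := sinh_pos_iff.2 (by linarith)
  set k := 2 * sinh η * sinh (η/2) with hk
  have hk0 : 0 < k := by positivity
  set c2 := 3*(8*sinh η^2*cosh η^2/k + 4*sinh η^2 + 4*(cosh η+1)) with hc2
  have hch := cosh_pos η
  refine ⟨√c2, by positivity, fun e he p hp => ?_⟩
  have h1 := dS_ge (φ := φ) hν he hp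
  rw [← hk] at h1
  have hw := ww_nonneg (φ := φ) hν hp
  have hw2 := ww_le_two (φ := φ) hν hp
  have he0 : 0 < e := by linarith [he.1]
  have hse : 0 < sinh e := sinh_pos_iff.2 he0
  have hse2 : sinh e ≤ sinh η := sinh_le_sinh.2 he.2.le
  have hce : cosh e ≤ cosh η := by
    rw [cosh_le_cosh, abs_of_pos he0, abs_of_pos hη]; exact he.2.le
  have hce0 := cosh_pos e
  have h3 := one_le_cosh (η - e)
  have h3' : cosh (η - e) ≤ cosh η := by
    rw [cosh_le_cosh, abs_of_pos hη, abs_of_pos (by linarith [he.2])]; linarith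
  have h4 : cos p.1 * cos ν ≤ 1 := by
    nlinarith [sin_sq_add_cos_sq p.1, sin_sq_add_cos_sq ν, sq_nonneg (cos p.1 - cos ν),
      sq_nonneg (sin p.1), sq_nonneg (sin ν)]
  have h4' : -1 ≤ cos p.1 * cos ν := by
    nlinarith [sin_sq_add_cos_sq p.1, sin_sq_add_cos_sq ν, sq_nonneg (cos p.1 + cos ν),
      sq_nonneg (sin p.1), sq_nonneg (sin ν)]
  have hD := dS_eq ν φ η e p
  have hm := mul_nonneg (sub_nonneg.2 h3) (sub_nonneg.2 h4)
  have hm1 : 0 ≤ 2 * sinh η * sinh e * ww ν φ p := by positivity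
  rw [← sqrt_mul (by positivity)]
  refine abs_le_sqrt ?_
  rw [dSe_eq]
  have hh : sinh (e - η)^2 = (cosh (η - e) - 1)*(cosh (η - e) + 1) := by
    have := cosh_sq (e - η)
    rw [← cosh_neg, neg_sub] at this
    linear_combination -this
  set D := dS ν φ η e p with hDd
  set w := ww ν φ p
  set r := 1 - cos p.1 * cos ν with hr
  have hr2 : r ≤ 2 := by linarith
  have hr0 : 0 ≤ r := by linarith
  have hD0 : 0 ≤ D := le_trans (by positivity) h1
  have b1 : (2 * sinh η * cosh e * w)^2 ≤ 8*sinh η^2*cosh η^2/k * D := by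
    have : w^2 ≤ 2 * (D / k) := by
      have : w ≤ D/k := by rw [le_div_iff₀ hk0]; linarith
      nlinarith
    calc _ = 4 * sinh η^2 * cosh e^2 * w^2 := by ring
      _ ≤ 4 * sinh η^2 * cosh η^2 * (2 * (D/k)) := by gcongr
      _ = _ := by ring
  have b2 : (2 * (cosh e - cosh η) * sinh e)^2 ≤ 4*sinh η^2 * D := by
    have : (cosh e - cosh η)^2 ≤ D := by nlinarith [sq_nonneg (cos p.1 - cos ν)]
    calc _ = 4 * sinh e^2 * (cosh e - cosh η)^2 := by ring
      _ ≤ _ := by gcongr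
  have b3 : (2 * sinh (e - η) * r)^2 ≤ 4*(cosh η+1) * D := by
    have : 2 * (cosh (η - e) - 1) * r ≤ D := by
      nlinarith [sq_nonneg (cos p.1 - cos ν), sq_nonneg (cosh η - cosh e)]
    calc _ = 4 * (cosh (η - e) + 1) * ((cosh (η - e) - 1) * r * r) := by
            rw [mul_pow, mul_pow, hh]; ring
      _ ≤ 4 * (cosh η + 1) * ((cosh (η - e) - 1) * r * 2) := by
            have := mul_nonneg (sub_nonneg.2 h3) hr0
            gcongr
      _ ≤ 4 * (cosh η + 1) * D := by
            refine mul_le_mul_of_nonneg_left ?_ (by positivity)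
            linarith
  generalize 2 * sinh η * cosh e * w = x1 at *
  generalize 2 * (cosh e - cosh η) * sinh e = x2 at *
  generalize 2 * sinh (e - η) * r = x3 at *
  rw [hc2]
  nlinarith [sq_nonneg (x1 - x2), sq_nonneg (x2 - x3), sq_nonneg (x1 - x3)]

theorem dS_cont_e (ν φ η : ℝ) (p : ℝ × ℝ) : Continuous fun e => dS ν φ η e p := by
  unfold dS dD; fun_prop
theorem dSe_cont_e (ν φ η : ℝ) (p : ℝ × ℝ) : Continuous fun e => dSe ν φ η e p := by
  unfold dSe dDe; fun_prop
theorem dS_cont_p (ν φ η e : ℝ) : Continuous (dS ν φ η e) := by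
  unfold dS dD; fun_prop
theorem dSe_cont_p (ν φ η e : ℝ) : Continuous (dSe ν φ η e) := by
  unfold dSe dDe; fun_prop

theorem lim0 {ν φ η : ℝ} (hν : ν ∈ Set.Ioo 0 π) (hη : 0 < η) {S T : ℝ → ℝ}
    (hS : Continuous S) (hT : Continuous T) :
    Tendsto (bb0 (sinh η * sin ν * cos φ) (sinh η * sin ν * sin φ) (cosh η * cos ν) S T)
      (𝓝[<] η) (𝓝 (gam ν φ S T η)) := by
  obtain ⟨M, hM, hb⟩ := st_bd hS hT
  have hA : 0 < sinh η := sinh_pos_iff.2 hη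
  have hA2 : 0 < sinh (η/2) := sinh_pos_iff.2 (by linarith)
  have cst : Continuous fun p : ℝ×ℝ => sin p.1 * S p.1 * T p.2 := by fun_prop
  refine tendsto_integral_filter_of_dominated_convergence
    (fun p => M * (√(2 * sinh η * sinh (η/2)))⁻¹ * (√(ww ν φ p))⁻¹) ?_ ?_ ?_ ?_
  · exact Eventually.of_forall fun e => (cst.measurable.mul
      (g0_meas (dS_cont_p ν φ η e))).aestronglyMeasurable
  · filter_upwards [Ioo_mem_nhdsLT (show η/2 < η by linarith)] with e he
    filter_upwards [ae_ww ν φ hν] with p hp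
    rw [norm_mul, norm_eq_abs, norm_eq_abs, mul_assoc M]
    exact mul_le_mul (hb p hp.1) (g0_bd (by positivity) hp.2 (dS_ge hν he hp.1)) (abs_nonneg _) hM.le
  · exact (wi_int ν φ hν).const_mul _
  · filter_upwards [ae_ww ν φ hν] with p hp
    refine Tendsto.const_mul _ ?_
    have hpos : 0 < dS ν φ η η p := by
      rw [dS_self]
      have := hp.2
      exact lt_of_lt_of_le (by positivity) (rr_ge ν φ η p)
    have h2 : ContinuousAt (fun e => g0 (dS ν φ η e p)) η := by
      unfold g0
      exact ((dS_cont_e ν φ η p).continuousAt.sqrt).inv₀ (sqrt_pos.2 hpos).ne'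
    have h3 := h2.tendsto.mono_left (nhdsWithin_le_nhds (s := Set.Iio η))
    rw [dS_self] at h3
    exact h3

theorem lim1 {ν φ η : ℝ} (hν : ν ∈ Set.Ioo 0 π) (hη : 0 < η) {f : ℝ × ℝ → ℝ}
    (hf : Continuous f) {C : ℝ} (hC : 0 ≤ C) (hfb : ∀ p ∈ boxK, |f p| ≤ C * √(ww ν φ p)) :
    Tendsto (fun e => ∫ p in boxK, f p * g1 (dS ν φ η e p) (dSe ν φ η e p))
      (𝓝[<] η) (𝓝 (∫ p in boxK, f p * g1 (rr ν φ η p) (2 * sinh η * cosh η * ww ν φ p))) := by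
  have hA : 0 < sinh η := sinh_pos_iff.2 hη
  have hA2 : 0 < sinh (η/2) := sinh_pos_iff.2 (by linarith)
  obtain ⟨c, hc, hcb⟩ := dSe_bd (φ := φ) hν hη
  refine tendsto_integral_filter_of_dominated_convergence
    (fun p => C * (1/2 * c * (2 * sinh η * sinh (η/2))⁻¹) * (√(ww ν φ p))⁻¹) ?_ ?_ ?_ ?_
  · exact Eventually.of_forall fun e => (hf.measurable.mul
      (g1_meas (dS_cont_p ν φ η e) (dSe_cont_p ν φ η e))).aestronglyMeasurable
  · filter_upwards [Ioo_mem_nhdsLT (show η/2 < η by linarith)] with e he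
    filter_upwards [ae_ww ν φ hν] with p hp
    rw [norm_mul, norm_eq_abs, norm_eq_abs]
    have h1 := g1_bd2 (by positivity) hp.2 (dS_ge hν he hp.1) hc (hcb e he p hp.1)
    calc _ ≤ (C * √(ww ν φ p)) * (1/2 * c * (2 * sinh η * sinh (η/2))⁻¹ * (ww ν φ p)⁻¹) :=
          mul_le_mul (hfb p hp.1) h1 (abs_nonneg _) (by positivity)
      _ = _ := by
          have hw := hp.2
          have : √(ww ν φ p) * (ww ν φ p)⁻¹ = (√(ww ν φ p))⁻¹ := by
            have hs := sqrt_pos.2 hw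
            nth_rewrite 2 [← sq_sqrt hw.le]
            field_simp
          rw [← this]; ring
  · exact (wi_int ν φ hν).const_mul _
  · filter_upwards [ae_ww ν φ hν] with p hp
    refine Tendsto.const_mul _ ?_
    have hpos : 0 < dS ν φ η η p := by
      rw [dS_self]
      have := hp.2
      exact lt_of_lt_of_le (by positivity) (rr_ge ν φ η p)
    have h2 : ContinuousAt (fun e => g1 (dS ν φ η e p) (dSe ν φ η e p)) η := by
      unfold g1
      exact (continuousAt_const.mul ((((dS_cont_e ν φ η p).continuousAt.sqrt).inv₀
        (sqrt_pos.2 hpos).ne').pow 3)).mul (dSe_cont_e ν φ η p).continuousAt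
    have h3 := h2.tendsto.mono_left (nhdsWithin_le_nhds (s := Set.Iio η))
    rw [dS_self, dSe_self] at h3
    exact h3


theorem abs_le_cos {x : ℝ} (hx : |x| ≤ π) : |x| ≤ π * √(1 - cos x) := by
  have h := cos_le_one_sub_mul_cos_sq hx
  have hp := pi_pos
  have h2 : (|x|/π)^2 ≤ 1 - cos x := by
    rw [div_pow, sq_abs]
    have : 0 ≤ x^2/π^2 := by positivity
    have e : 2/π^2*x^2 = 2*(x^2/π^2) := by ring
    linarith
  have h3 := le_sqrt_of_sq_le h2
  rw [div_le_iff₀ hp] at h3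
  linarith

theorem lipT {T : ℝ → ℝ} {L : ℝ} (hL : ∀ x y, |T x - T y| ≤ L * |x - y|)
    (hp : Function.Periodic T (2*π)) (t φ : ℝ) :
    |T t - T φ| ≤ L * (π * √(1 - cos (t - φ))) := by
  have hL0 : 0 ≤ L := by
    have := hL 1 0
    simp at this
    exact (abs_nonneg _).trans this
  obtain ⟨k, hk, -⟩ := existsUnique_sub_zsmul_mem_Ico (two_pi_pos) t (φ - π)
  have h1 : T (t - k • (2*π)) = T t := hp.sub_zsmul_eq k
  have h2 : cos (t - k • (2*π) - φ) = cos (t - φ) := by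
    rw [show t - k • (2*π) - φ = (t - φ) - k * (2*π) by simp; ring, cos_sub_int_mul_two_pi]
  rw [← h1, ← h2]
  refine (hL _ _).trans (mul_le_mul_of_nonneg_left (abs_le_cos ?_) hL0)
  rw [abs_le]
  constructor <;> linarith [hk.1, hk.2]

theorem lipS {S S1 : ℝ → ℝ} (hS : ∀ x, HasDerivAt S (S1 x) x) (hS1 : Continuous S1)
    {ν : ℝ} (hν : ν ∈ Set.Ioo 0 π) : ∃ L, 0 ≤ L ∧ ∀ φ, ∀ p ∈ boxK,
    |S p.1 - S ν| ≤ L * √(ww ν φ p) := by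
  obtain ⟨M, hM⟩ := isCompact_Icc.exists_bound_of_continuousOn (s := Set.Icc 0 π)
    (f := S1) hS1.continuousOn
  have hM0 : 0 ≤ M := (norm_nonneg _).trans (hM ν ⟨hν.1.le, hν.2.le⟩)
  refine ⟨M * π, by positivity, fun φ p hp => ?_⟩
  have := Convex.norm_image_sub_le_of_norm_hasDerivWithin_le (f := S) (f' := S1)
    (s := Set.Icc 0 π) (C := M)
    (fun x _ => (hS x).hasDerivWithinAt) hM (convex_Icc _ _) ⟨hν.1.le, hν.2.le⟩ hp.1
  have h2 : |p.1 - ν| ≤ π * √(1 - cos (p.1 - ν)) := abs_le_cos (by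
    rw [abs_le]; constructor <;> linarith [hp.1.1, hp.1.2, hν.1, hν.2])
  calc _ ≤ M * |p.1 - ν| := this
    _ ≤ M * (π * √(1 - cos (p.1 - ν))) := by gcongr
    _ ≤ M * (π * √(ww ν φ p)) := by
        have := ww_ge1 (φ := φ) hν hp
        gcongr
    _ = _ := by ring

theorem jump_bd {S S1 T : ℝ → ℝ} (hS : ∀ x, HasDerivAt S (S1 x) x) (hS1 : Continuous S1)
    {L B : ℝ} (hL : ∀ x y, |T x - T y| ≤ L * |x - y|) (hp : Function.Periodic T (2*π))
    (hB : ∀ t, |T t| ≤ B) {ν : ℝ} (hν : ν ∈ Set.Ioo 0 π) (φ : ℝ) :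
    ∃ C, 0 ≤ C ∧ ∀ p ∈ boxK, |sin p.1 * (S p.1 * T p.2 - S ν * T φ)| ≤ C * √(ww ν φ p) := by
  obtain ⟨K, hK, hSb⟩ := lipS hS hS1 hν
  have hL0 : 0 ≤ L := by
    have := hL 1 0
    simp at this
    exact (abs_nonneg _).trans this
  have hB0 : 0 ≤ B := (abs_nonneg _).trans (hB 0)
  have hk : 0 < (1 - |cos ν|)/2 := by linarith [abs_cos_lt hν]
  set κ := (1 - |cos ν|)/2 with hκ
  refine ⟨K * B + |S ν| * (L * π * (√κ)⁻¹), by positivity, fun p hpp => ?_⟩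
  have h1 := hSb φ p hpp
  have h2 := lipT hL hp p.2 φ
  have h3 : √(1 - cos (p.2 - φ)) ≤ (√κ)⁻¹ * √(ww ν φ p) := by
    have := ww_ge2 (φ := φ) hν hpp
    rw [← hκ] at this
    have := sqrt_le_sqrt this
    rw [sqrt_mul hk.le] at this
    rw [inv_mul_eq_div, le_div_iff₀ (sqrt_pos.2 hk)]
    linarith
  have h4 : |sin p.1| ≤ 1 := abs_sin_le_one _
  rw [abs_mul]
  calc _ ≤ 1 * |S p.1 * T p.2 - S ν * T φ| := by gcongr
    _ = |(S p.1 - S ν) * T p.2 + S ν * (T p.2 - T φ)| := by rw [one_mul]; congr 1; ring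
    _ ≤ |S p.1 - S ν| * |T p.2| + |S ν| * |T p.2 - T φ| := by
        rw [← abs_mul, ← abs_mul]; exact abs_add_le _ _
    _ ≤ (K * √(ww ν φ p)) * B + |S ν| * (L * (π * ((√κ)⁻¹ * √(ww ν φ p)))) := by
        have h5 := hB p.2
        have h6 : |T p.2 - T φ| ≤ L * (π * ((√κ)⁻¹ * √(ww ν φ p))) := h2.trans (by gcongr)
        gcongr
    _ = _ := by ring

theorem bb1_one {ν φ η : ℝ} (hν : ν ∈ Set.Ioo 0 π) (e : ℝ) (he : e ∈ Set.Ioo 0 η) :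
    bb1 (sinh η * sin ν * cos φ) (sinh η * sin ν * sin φ) (cosh η * cos ν)
      (fun _ => 1) (fun _ => 1) e = 0 := by
  have := green_off (sinh η * sin ν * cos φ) (sinh η * sin ν * sin φ) (cosh η * cos ν) η
    (dS_pos hν) (fun _ => 1) (fun _ => 0) (fun _ => 0) (fun _ => 1) (fun _ => 0) 0 0
    (fun x => hasDerivAt_const x 1) (fun x => hasDerivAt_const x 0) continuous_const
    (fun x => hasDerivAt_const x 1) (fun x => by simpa using hasDerivAt_const x (0:ℝ)) rfl rfl
    (by simp) (fun _ => 1) (fun _ => 0) (fun _ => 0)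
    (fun x => hasDerivAt_const x 1) (fun x => hasDerivAt_const x 0) (by simp) e he
  simpa using this

theorem surf_ode0 {ν φ η : ℝ} (hν : ν ∈ Set.Ioo 0 π) (hη : 0 < η)
    {S S1 T : ℝ → ℝ} (hS : ∀ x, HasDerivAt S (S1 x) x) (hS1 : Continuous S1)
    (hT : Continuous T)
    {L B : ℝ} (hL : ∀ x y, |T x - T y| ≤ L * |x - y|) (hp : Function.Periodic T (2*π))
    (hB : ∀ t, |T t| ≤ B) {P P1 : ℝ → ℝ} (hP : Continuous P) (hP1 : Continuous P1)
    (hG : ∀ e ∈ Set.Ioo 0 η, P e * bb1 (sinh η * sin ν * cos φ) (sinh η * sin ν * sin φ)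
      (cosh η * cos ν) S T e = P1 e * bb0 (sinh η * sin ν * cos φ) (sinh η * sin ν * sin φ)
      (cosh η * cos ν) S T e) :
    P η * (1/2 * (gam1 ν φ S T η - S ν * T φ * gam1 ν φ (fun _ => 1) (fun _ => 1) η))
      = P1 η * gam ν φ S T η := by
  have hSc : Continuous S := continuous_iff_continuousAt.2 fun x => (hS x).continuousAt
  obtain ⟨C, hC, hj⟩ := jump_bd hS hS1 hL hp hB hν φ
  have l1 := lim1 (φ := φ) hν hη (f := fun p => sin p.1 * (S p.1 * T p.2 - S ν * T φ))
    (by fun_prop) hC hj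
  have l0 := lim0 (φ := φ) hν hη hSc hT
  have lP : Tendsto P (𝓝[<] η) (𝓝 (P η)) := hP.continuousAt.tendsto.mono_left nhdsWithin_le_nhds
  have lP1 : Tendsto P1 (𝓝[<] η) (𝓝 (P1 η)) := hP1.continuousAt.tendsto.mono_left nhdsWithin_le_nhds
  have hlim := tendsto_nhds_unique_of_eventuallyEq (lP.mul l1) (lP1.mul l0) (by
    filter_upwards [Ioo_mem_nhdsLT hη] with e he
    rw [← hG e he]
    congr 1
    have he' : e ∈ Set.Ioo (-η) η := ⟨by linarith [he.1, he.2], he.2⟩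
    have h0 := bb1_one (φ := φ) hν e he
    have cg : Continuous fun p : ℝ × ℝ => g1 (dS ν φ η e p) (dSe ν φ η e p) :=
      continuousOn_univ.1 (g1_cont (dS_cont_p ν φ η e).continuousOn
        (dSe_cont_p ν φ η e).continuousOn (fun p _ => dS_pos hν e he' _ _))
    have intg : ∀ f : ℝ × ℝ → ℝ, Continuous f → IntegrableOn f boxK := fun f hf =>
      hf.continuousOn.integrableOn_compact boxK_compact
    have e1 : bb1 (sinh η * sin ν * cos φ) (sinh η * sin ν * sin φ) (cosh η * cos ν) S T e
      = ∫ p in boxK, sin p.1 * S p.1 * T p.2 * g1 (dS ν φ η e p) (dSe ν φ η e p) := rfl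
    have e2 : bb1 (sinh η * sin ν * cos φ) (sinh η * sin ν * sin φ) (cosh η * cos ν)
      (fun _ => 1) (fun _ => 1) e
      = ∫ p in boxK, sin p.1 * 1 * 1 * g1 (dS ν φ η e p) (dSe ν φ η e p) := rfl
    have : ∫ p in boxK, sin p.1 * (S p.1 * T p.2 - S ν * T φ) * g1 (dS ν φ η e p) (dSe ν φ η e p)
      = (∫ p in boxK, sin p.1 * S p.1 * T p.2 * g1 (dS ν φ η e p) (dSe ν φ η e p))
        - S ν * T φ * ∫ p in boxK, sin p.1 * 1 * 1 * g1 (dS ν φ η e p) (dSe ν φ η e p) := by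
      rw [← integral_const_mul, ← integral_sub (intg _ (by fun_prop)) (intg _ (by fun_prop))]
      congr 1; funext p; ring
    rw [this, ← e1, ← e2, h0]; ring)
  have i1 := (gam_deriv (φ := φ) hν hη hSc hT).1
  have i2 := (gam_deriv (φ := φ) hν hη (S := fun _ => 1) (T := fun _ => 1)
    continuous_const continuous_const).1
  have : ∫ p in boxK, sin p.1 * (S p.1 * T p.2 - S ν * T φ) * g1 (rr ν φ η p)
      (2 * sinh η * cosh η * ww ν φ p) =
      1/2 * (gam1 ν φ S T η - S ν * T φ * gam1 ν φ (fun _ => 1) (fun _ => 1) η) := by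
    unfold gam1
    rw [← integral_const_mul, ← integral_sub i1 (i2.const_mul _), ← integral_const_mul]
    congr 1; funext p; unfold g1; ring
  rw [this] at hlim
  exact hlim

/-- potential of the unit density -/
def gOne (ν η : ℝ) : ℝ := 2*π*(arsinh ((1 - cosh η * cos ν)/(sinh η * sin ν))
  + arsinh ((1 + cosh η * cos ν)/(sinh η * sin ν)))

theorem bb0_zero {ν φ η : ℝ} (hν : ν ∈ Set.Ioo 0 π) (hη : 0 < η) :
    bb0 (sinh η * sin ν * cos φ) (sinh η * sin ν * sin φ) (cosh η * cos ν)
      (fun _ => 1) (fun _ => 1) 0 = gOne ν η := by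
  have hn : 0 < sin ν := sin_pos_of_mem_Ioo hν
  have hA : 0 < sinh η := sinh_pos_iff.2 hη
  have hD : ∀ p : ℝ × ℝ, dD (sinh η * sin ν * cos φ) (sinh η * sin ν * sin φ) (cosh η * cos ν) 0 p.1 p.2
      = (sinh η * sin ν)^2 + (cos p.1 - cosh η * cos ν)^2 := by
    intro p
    unfold dD
    simp only [sinh_zero, cosh_zero]
    linear_combination (sinh η * sin ν)^2 * sin_sq_add_cos_sq φ
  unfold bb0
  simp only [hD]
  have hpos : ∀ θ : ℝ, 0 < (sinh η * sin ν)^2 + (cos θ - cosh η * cos ν)^2 := fun θ => by positivity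
  have cg : Continuous fun θ : ℝ => g0 ((sinh η * sin ν)^2 + (cos θ - cosh η * cos ν)^2) :=
    continuousOn_univ.1 (g0_cont (by fun_prop) (fun θ _ => hpos θ))
  rw [(box_split (fun p => sin p.1 * 1 * 1 * g0 ((sinh η * sin ν)^2 + (cos p.1 - cosh η * cos ν)^2))
    (by
      have : Continuous fun p : ℝ × ℝ => g0 ((sinh η * sin ν)^2 + (cos p.1 - cosh η * cos ν)^2) :=
        cg.comp continuous_fst
      fun_prop)).2]
  have key := icc_ftc (f := fun θ => - arsinh ((cos θ - cosh η * cos ν)/(sinh η * sin ν)))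
    (f' := fun θ => sin θ * 1 * 1 * g0 ((sinh η * sin ν)^2 + (cos θ - cosh η * cos ν)^2))
    (a := 0) (b := π) pi_pos.le ?_ (by fun_prop)
  · simp only [key]
    rw [integral_const]
    simp only [measureReal_restrict_apply MeasurableSet.univ, Set.univ_inter]
    rw [Real.volume_real_Icc_of_le two_pi_pos.le]
    unfold gOne
    simp only [cos_pi, cos_zero, smul_eq_mul]
    rw [show (-1 - cosh η * cos ν)/(sinh η * sin ν) = -((1 + cosh η * cos ν)/(sinh η * sin ν)) by ring,
      arsinh_neg]
    ring
  · intro θ _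
    have := ((((hasDerivAt_cos θ).sub_const (cosh η * cos ν)).div_const (sinh η * sin ν)).arsinh).neg
    refine this.congr_deriv ?_
    unfold g0
    have hb : 0 < sinh η * sin ν := by positivity
    have : √(1 + ((cos θ - cosh η * cos ν)/(sinh η * sin ν))^2)
      = √((sinh η * sin ν)^2 + (cos θ - cosh η * cos ν)^2) / (sinh η * sin ν) := by
      rw [eq_div_iff hb.ne']
      nth_rewrite 2 [← sqrt_sq hb.le]
      rw [← sqrt_mul (by positivity)]
      congr 1
      field_simp
    rw [this]
    have := sqrt_pos.2 (hpos θ)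
    simp only [smul_eq_mul]
    field_simp

theorem gam_one {ν φ η : ℝ} (hν : ν ∈ Set.Ioo 0 π) (hη : 0 < η) :
    gam ν φ (fun _ => 1) (fun _ => 1) η = gOne ν η := by
  have l0 := lim0 (φ := φ) hν hη (S := fun _ => 1) (T := fun _ => 1)
    continuous_const continuous_const
  rw [← bb0_zero (φ := φ) hν hη]
  refine tendsto_nhds_unique l0 ?_
  refine tendsto_const_nhds.congr' ?_
  filter_upwards [Ioo_mem_nhdsLT hη] with e he
  set f := bb0 (sinh η * sin ν * cos φ) (sinh η * sin ν * sin φ) (cosh η * cos ν)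
    (fun _ => 1) (fun _ => 1) with hf
  have hd : ∀ x ∈ Set.Ioo (-η) η, HasDerivAt f _ x := fun x hx =>
    bb0_deriv _ _ _ η (dS_pos hν) (fun _ => 1) (fun _ => 1) continuous_const continuous_const x hx
  have hmem : ∀ x ∈ Set.Icc 0 e, x ∈ Set.Ioo (-η) η := fun x hx =>
    ⟨by linarith [hx.1, he.1, he.2], lt_of_le_of_lt hx.2 he.2⟩
  obtain ⟨c, hc, hc2⟩ := exists_deriv_eq_slope f he.1
    (fun x hx => (hd x (hmem x hx)).continuousAt.continuousWithinAt)
    (fun x hx => (hd x (hmem x ⟨hx.1.le, hx.2.le⟩)).differentiableAt.differentiableWithinAt)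
  rw [(hd c (hmem c ⟨hc.1.le, hc.2.le⟩)).deriv, bb1_one hν c ⟨hc.1, hc.2.trans he.2⟩] at hc2
  have := he.1
  field_simp at hc2
  linarith

theorem gOne_deriv {ν η : ℝ} (hν : ν ∈ Set.Ioo 0 π) (hη : 0 < η) :
    HasDerivAt (gOne ν) (-4*π/sinh η) η := by
  have hn : 0 < sin ν := sin_pos_of_mem_Ioo hν
  have hA : 0 < sinh η := sinh_pos_iff.2 hη
  have hb : 0 < sinh η * sin ν := by positivity
  have hu : 1 < cosh η := one_lt_cosh.2 hη.ne'
  have d1 := ((((hasDerivAt_cosh η).mul_const (cos ν)).const_sub 1).div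
    ((hasDerivAt_sinh η).mul_const (sin ν)) hb.ne').arsinh
  have d2 := ((((hasDerivAt_cosh η).mul_const (cos ν)).const_add 1).div
    ((hasDerivAt_sinh η).mul_const (sin ν)) hb.ne').arsinh
  have := (d1.add d2).const_mul (2*π)
  refine this.congr_deriv ?_
  have c2 := cosh_sq η
  have c5 := sin_sq_add_cos_sq ν
  have s1 : √(1 + ((1 - cosh η * cos ν)/(sinh η * sin ν))^2)
      = (cosh η - cos ν)/(sinh η * sin ν) := by
    rw [sqrt_eq_iff_mul_self_eq (by positivity)
      (div_nonneg (by linarith [cos_le_one ν]) hb.le)]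
    field_simp
    linear_combination sinh η^2 * c5 - (1 - cos ν^2) * c2
  have s2 : √(1 + ((1 + cosh η * cos ν)/(sinh η * sin ν))^2)
      = (cosh η + cos ν)/(sinh η * sin ν) := by
    rw [sqrt_eq_iff_mul_self_eq (by positivity)
      (div_nonneg (by linarith [neg_one_le_cos ν]) hb.le)]
    field_simp
    linear_combination sinh η^2 * c5 - (1 - cos ν^2) * c2
  simp only [Pi.div_apply]
  rw [s1, s2]
  have p1 : 0 < cosh η - cos ν := by linarith [cos_le_one ν]
  have p2 : 0 < cosh η + cos ν := by linarith [neg_one_le_cos ν]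
  simp only [smul_eq_mul]
  field_simp
  rw [show sinh η^2 = cosh η^2 - 1 by linarith]
  ring

theorem gam1_one {ν φ η : ℝ} (hν : ν ∈ Set.Ioo 0 π) (hη : 0 < η) :
    gam1 ν φ (fun _ => 1) (fun _ => 1) η = -4*π/sinh η := by
  have h1 := (gam_deriv (φ := φ) hν hη (S := fun _ => 1) (T := fun _ => 1)
    continuous_const continuous_const).2
  refine h1.unique ((gOne_deriv hν hη).congr_of_eventuallyEq ?_)
  filter_upwards [lt_mem_nhds hη] with x hx using gam_one hν hx

theorem surf_ode {ν φ η : ℝ} (hν : ν ∈ Set.Ioo 0 π) (hη : 0 < η)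
    {S S1 T : ℝ → ℝ} (hS : ∀ x, HasDerivAt S (S1 x) x) (hS1 : Continuous S1)
    (hT : Continuous T)
    {L B : ℝ} (hL : ∀ x y, |T x - T y| ≤ L * |x - y|) (hp : Function.Periodic T (2*π))
    (hB : ∀ t, |T t| ≤ B) {P P1 : ℝ → ℝ} (hP : Continuous P) (hP1 : Continuous P1)
    (hG : ∀ e ∈ Set.Ioo 0 η, P e * bb1 (sinh η * sin ν * cos φ) (sinh η * sin ν * sin φ)
      (cosh η * cos ν) S T e = P1 e * bb0 (sinh η * sin ν * cos φ) (sinh η * sin ν * sin φ)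
      (cosh η * cos ν) S T e) :
    P η * gam1 ν φ S T η + 4*π*(S ν * T φ) * P η / sinh η = 2 * P1 η * gam ν φ S T η := by
  have h := surf_ode0 hν hη hS hS1 hT hL hp hB hP hP1 hG
  rw [gam1_one hν hη] at h
  linear_combination 2 * h


/-- generic associated function -/
def aF (q : ℝ → ℝ) (f g : ℝ → ℝ) (m : ℕ) (x : ℝ) : ℝ := f x^m * q (g x)
/-- its first derivative -/
def aF1 (q q1 : ℝ → ℝ) (ε : ℝ) (f g : ℝ → ℝ) (m : ℕ) (x : ℝ) : ℝ :=
  m * f x^(m-1) * g x * q (g x) + ε * f x^(m+1) * q1 (g x)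
/-- its second derivative -/
def aF2 (q q1 q2 : ℝ → ℝ) (ε : ℝ) (f g : ℝ → ℝ) (m : ℕ) (x : ℝ) : ℝ :=
  (m * (((m-1 : ℕ):ℝ) * f x^(m-1-1) * g x) * g x + m * f x^(m-1) * (ε * f x)) * q (g x)
  + m * f x^(m-1) * g x * (q1 (g x) * (ε * f x))
  + (ε * ((m+1) * f x^m * g x) * q1 (g x) + ε * f x^(m+1) * (q2 (g x) * (ε * f x)))

theorem pw1 (m : ℕ) (s : ℝ) : (m:ℝ) * s^(m-1) * s = m * s^m := by
  rcases m with _ | k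
  · simp
  · simp [pow_succ]; ring

theorem pw2 (m : ℕ) (s : ℝ) : (m:ℝ) * ((m-1:ℕ):ℝ) * s^(m-1-1) * s^2 = m * (m-1) * s^m := by
  rcases m with _ | _ | k
  · simp
  · simp
  · simp [pow_succ]; ring

theorem aF_d {q q1 f g : ℝ → ℝ} {ε : ℝ} {m : ℕ} {x : ℝ} (hf : HasDerivAt f (g x) x)
    (hg : HasDerivAt g (ε * f x) x) (hq : HasDerivAt q (q1 (g x)) (g x)) :
    HasDerivAt (aF q f g m) (aF1 q q1 ε f g m x) x := by
  have := (hf.pow m).mul (hq.comp x hg)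
  refine this.congr_deriv ?_
  simp only [aF1, Pi.pow_apply, Function.comp]; ring

theorem aF1_d {q q1 q2 f g : ℝ → ℝ} {ε : ℝ} {m : ℕ} {x : ℝ} (hf : HasDerivAt f (g x) x)
    (hg : HasDerivAt g (ε * f x) x) (hq : HasDerivAt q (q1 (g x)) (g x))
    (hq1 : HasDerivAt q1 (q2 (g x)) (g x)) :
    HasDerivAt (aF1 q q1 ε f g m) (aF2 q q1 q2 ε f g m x) x := by
  have := ((((hf.pow (m-1)).const_mul (m:ℝ)).mul hg).mul (hq.comp x hg)).add
    (((hf.pow (m+1)).const_mul ε).mul (hq1.comp x hg))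
  refine this.congr_deriv ?_
  simp only [aF2, Pi.pow_apply, Pi.mul_apply, Function.comp, Nat.add_sub_cancel]; push_cast; ring

theorem aF_ode {q q1 q2 f g : ℝ → ℝ} {ε ℓ : ℝ} {m : ℕ} {x : ℝ} (hε : ε^2 = 1)
    (hfg : f x^2 = ε * (g x^2 - 1))
    (hode : (g x^2-1) * q2 (g x) + 2*(m+1)*g x*q1 (g x) - (ℓ - m*(m+1)) * q (g x) = 0) :
    f x * (f x * aF2 q q1 q2 ε f g m x + g x * aF1 q q1 ε f g m x) =
      (m^2 + ε * ℓ * f x^2) * aF q f g m x := by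
  simp only [aF, aF1, aF2]
  have h1 := pw1 m (f x)
  have h2 := pw2 m (f x)
  generalize f x = F at *
  generalize g x = G at *
  generalize q G = a at *
  generalize q1 G = b at *
  generalize q2 G = c at *
  have hG : G^2 - 1 = ε * F^2 := by linear_combination -ε*hfg - (G^2-1)*hε
  rw [hG] at hode
  have hG2 : G^2 = 1 + ε * F^2 := by linarith
  have e1 : F * (F * (((m:ℝ) * (((m-1:ℕ):ℝ) * F^(m-1-1) * G) * G + m * F^(m-1) * (ε * F)) * a
      + m * F^(m-1) * G * (b * (ε * F))
      + (ε * ((m+1) * F^m * G) * b + ε * F^(m+1) * (c * (ε * F))))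
      + G * (m * F^(m-1) * G * a + ε * F^(m+1) * b))
      = (m * (m-1) * F^m * G^2 + m * F^m * ε * F^2) * a + m * F^m * F^2 * G * b * ε
      + (ε * (m+1) * F^m * F^2 * G * b + ε^2 * F^m * F^4 * c)
      + G * (m * F^m * G * a + ε * F^m * F^2 * b) := by
    linear_combination (G^2 * a) * h2 + (ε * F^2 * a + G*b*ε*F^2 + G^2 * a) * h1
  rw [e1]
  linear_combination (ε * F^m * F^2) * hode + m^2 * F^m * a * hG2

/-- Ferrers function in angle form -/
def Sf (n m : ℕ) : ℝ → ℝ := aF (legD n m) sin cos m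
/-- first kind in hyperbolic form -/
def Pf (n m : ℕ) : ℝ → ℝ := aF (legD n m) sinh cosh m
/-- derivative -/
def Pf1 (n m : ℕ) : ℝ → ℝ := aF1 (legD n m) (legD n (m+1)) 1 sinh cosh m
/-- second kind in hyperbolic form -/
def Qf (n m : ℕ) : ℝ → ℝ := aF (legQ n m) sinh cosh m
/-- derivative -/
def Qf1 (n m : ℕ) : ℝ → ℝ := aF1 (legQ n m) (legQ n (m+1)) 1 sinh cosh m
/-- azimuthal mode -/
def Tf (m : ℕ) (β t : ℝ) : ℝ := cos (m * t + β)

theorem Tf_d (m : ℕ) (β t : ℝ) : HasDerivAt (Tf m β) (-m * sin (m*t+β)) t := by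
  have := (((hasDerivAt_id t).const_mul (m:ℝ)).add_const β).cos
  refine this.congr_deriv ?_
  simp; ring

theorem Tf_per (m : ℕ) (β : ℝ) : Function.Periodic (Tf m β) (2*π) := by
  intro t
  unfold Tf
  rw [show (m:ℝ) * (t + 2*π) + β = (m * t + β) + m * (2*π) by ring, cos_add_nat_mul_two_pi]

theorem Tf_lip (m : ℕ) (β x y : ℝ) : |Tf m β x - Tf m β y| ≤ m * |x - y| := by
  have := Convex.norm_image_sub_le_of_norm_hasDerivWithin_le (f := Tf m β)
    (f' := fun t => -m * sin (m*t+β)) (s := Set.univ) (C := m) (x := y) (y := x)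
    (fun x _ => (Tf_d m β x).hasDerivWithinAt) (fun x _ => by
      rw [norm_eq_abs, abs_mul, abs_neg, Nat.abs_cast]
      exact mul_le_of_le_one_right (Nat.cast_nonneg _) (abs_sin_le_one _))
    convex_univ trivial trivial
  exact this

theorem Sf_d (n m : ℕ) (x : ℝ) : HasDerivAt (Sf n m)
    (aF1 (legD n m) (legD n (m+1)) (-1) sin cos m x) x :=
  aF_d (hasDerivAt_sin x) (by simpa using hasDerivAt_cos x) (legD_hasDerivAt n m _)

theorem Pf_d (n m : ℕ) (x : ℝ) : HasDerivAt (Pf n m) (Pf1 n m x) x :=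
  aF_d (hasDerivAt_sinh x) (by simpa using hasDerivAt_cosh x) (legD_hasDerivAt n m _)

theorem Qf_d (n m : ℕ) (x : ℝ) (hx : 0 < x) : HasDerivAt (Qf n m) (Qf1 n m x) x :=
  aF_d (hasDerivAt_sinh x) (by simpa using hasDerivAt_cosh x)
    (legQ_hasDerivAt n m _ (one_lt_cosh.2 hx.ne'))

theorem aF1_cont {q q1 f g : ℝ → ℝ} {ε : ℝ} {m : ℕ} (hf : Continuous f) (hg : Continuous g)
    (hq : Continuous q) (hq1 : Continuous q1) : Continuous (aF1 q q1 ε f g m) := by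
  unfold aF1; fun_prop

theorem mode_ode (n m : ℕ) (β : ℝ) {ν φ η : ℝ} (hν : ν ∈ Set.Ioo 0 π) (hη : 0 < η) :
    Pf n m η * gam1 ν φ (Sf n m) (Tf m β) η + 4*π*(Sf n m ν * Tf m β φ) * Pf n m η / sinh η
      = 2 * Pf1 n m η * gam ν φ (Sf n m) (Tf m β) η := by
  have c0 := legD_cont n m
  have c1 := legD_cont n (m+1)
  have c2 := legD_cont n (m+2)
  have hPc : Continuous (Pf n m) := continuous_iff_continuousAt.2 fun x => (Pf_d n m x).continuousAt
  refine surf_ode hν hη (Sf_d n m) (aF1_cont continuous_sin continuous_cos c0 c1)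
    (continuous_iff_continuousAt.2 fun x => (Tf_d m β x).continuousAt) (Tf_lip m β) (Tf_per m β)
    (B := 1) (fun t => abs_cos_le_one _) hPc
    (aF1_cont continuous_sinh continuous_cosh c0 c1) ?_
  refine green_off _ _ _ η (dS_pos hν) (Sf n m) _
    (aF2 (legD n m) (legD n (m+1)) (legD n (m+2)) (-1) sin cos m) (Tf m β)
    (fun t => -m * sin (m*t+β)) (n*(n+1)) (m^2) (Sf_d n m) ?_ ?_ (Tf_d m β) ?_ ?_ ?_ ?_
    (Pf n m) (Pf1 n m) (aF2 (legD n m) (legD n (m+1)) (legD n (m+2)) 1 sinh cosh m)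
    (Pf_d n m) ?_ ?_
  · exact fun x => aF1_d (hasDerivAt_sin x) (by simpa using hasDerivAt_cos x)
      (legD_hasDerivAt n m _) (legD_hasDerivAt n (m+1) _)
  · unfold aF2; fun_prop
  · intro x
    have := ((((hasDerivAt_id x).const_mul (m:ℝ)).add_const β).sin).const_mul (-m:ℝ)
    refine this.congr_deriv ?_
    simp [Tf]; ring
  · have := (Tf_per m β) 0
    simpa using this
  · simp only [mul_zero, zero_add]
    rw [show (m:ℝ) * (2*π) + β = β + m * (2*π) by ring, sin_add_nat_mul_two_pi]
  · intro θ _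
    have := aF_ode (q := legD n m) (q1 := legD n (m+1)) (q2 := legD n (m+2)) (f := sin) (g := cos)
      (ε := -1) (ℓ := n*(n+1)) (m := m) (x := θ) (by norm_num)
      (by linarith [sin_sq_add_cos_sq θ]) (legD_ode n m _)
    rw [this]; unfold Sf; ring
  · exact fun x => aF1_d (hasDerivAt_sinh x) (by simpa using hasDerivAt_cosh x)
      (legD_hasDerivAt n m _) (legD_hasDerivAt n (m+1) _)
  · intro e _
    have := aF_ode (q := legD n m) (q1 := legD n (m+1)) (q2 := legD n (m+2)) (f := sinh) (g := cosh)
      (ε := 1) (ℓ := n*(n+1)) (m := m) (x := e) (by norm_num)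
      (by linarith [cosh_sq e]) (legD_ode n m _)
    unfold Pf Pf1; rw [this]; ring

/-- normalising constant -/
def kap (n m : ℕ) : ℝ := (((n-m).factorial : ℝ) / (n+m).factorial) * (-1)^m

theorem wronskH (n m : ℕ) (hm : m ≤ n) {x : ℝ} (hx : 0 < x) :
    kap n m * (sinh x * (Pf n m x * Qf1 n m x - Pf1 n m x * Qf n m x)) = -1 := by
  have h := wronsk n m hm (cosh x) (one_lt_cosh.2 hx.ne')
  rw [show cosh x^2 - 1 = sinh x^2 by linarith [cosh_sq x]] at h
  rw [← h]
  unfold kap Pf Pf1 Qf Qf1 aF aF1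
  ring

theorem cosh_tendsto : Tendsto cosh atTop atTop := by
  refine tendsto_atTop_mono' _ ?_ sinh_tendsto
  filter_upwards with x
  exact (sinh_lt_cosh x).le

theorem gam_eq (n m : ℕ) (hm : m ≤ n) (β : ℝ) {ν φ : ℝ} (hν : ν ∈ Set.Ioo 0 π) :
    ∀ η, 0 < η → gam ν φ (Sf n m) (Tf m β) η =
      4*π*kap n m*(Sf n m ν * Tf m β φ) * (Pf n m η * Qf n m η) := by
  obtain ⟨c, hc, hcp⟩ := legD_pos n m hm
  have hPpos : ∀ x, 0 < x → 0 < Pf n m x := fun x hx => by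
    have := (hcp (cosh x) (one_lt_cosh.2 hx.ne')).1
    have hs : 0 < sinh x := sinh_pos_iff.2 hx
    unfold Pf aF; positivity
  have hSc : Continuous (Sf n m) := continuous_iff_continuousAt.2 fun x => (Sf_d n m x).continuousAt
  have hTc : Continuous (Tf m β) := continuous_iff_continuousAt.2 fun x => (Tf_d m β x).continuousAt
  set K := 4*π*kap n m*(Sf n m ν * Tf m β φ) with hK
  set f : ℝ → ℝ := fun x => gam ν φ (Sf n m) (Tf m β) x / Pf n m x^2 - K * (Qf n m x / Pf n m x) with hf
  have hd : ∀ x ∈ Set.Ioi (0:ℝ), HasDerivAt f 0 x := by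
    intro x hx
    have hP := hPpos x hx
    have hs : 0 < sinh x := sinh_pos_iff.2 hx
    have := (((gam_deriv (φ := φ) hν hx hSc hTc).2.div ((Pf_d n m x).pow 2) (by
      simp only [Pi.pow_apply]; positivity)).sub
      (((Qf_d n m x hx).div (Pf_d n m x) hP.ne').const_mul K))
    refine this.congr_deriv ?_
    have o := mode_ode n m β (φ := φ) hν hx
    have w := wronskH n m hm hx
    simp only [Pi.pow_apply]
    rw [hK]
    field_simp
    field_simp at o
    push_cast
    simp only [Nat.add_one_sub_one, pow_one]
    refine mul_left_cancel₀ hs.ne' ?_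
    linear_combination (Pf n m x) * o - 4*π*Sf n m ν * Tf m β φ * Pf n m x^2 * w
  have hlim : Tendsto f atTop (𝓝 0) := by
    have h1 : Tendsto (fun x => legQ n m (cosh x)) atTop (𝓝 0) := (legQ_tendsto n m).comp cosh_tendsto
    have h2 := gam_tendsto (φ := φ) hν hSc hTc
    have h3 : Tendsto (fun x => |gam ν φ (Sf n m) (Tf m β) x| / c^2
      + |K| * (|legQ n m (cosh x)| / c)) atTop (𝓝 0) := by
      simpa using (h2.abs.div_const (c^2)).add ((h1.abs.div_const c).const_mul (|K|))
    refine squeeze_zero_norm' ?_ h3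
    filter_upwards [cosh_tendsto.eventually_ge_atTop 2, sinh_tendsto.eventually_ge_atTop 1,
      eventually_gt_atTop 0] with x h2 h1 h0
    have hp := (hcp (cosh x) (by linarith))
    have hq := hp.2 h2
    have hcP : c ≤ Pf n m x := by
      unfold Pf aF
      have := one_le_pow₀ h1 (n := m)
      nlinarith
    have hQP : Qf n m x / Pf n m x = legQ n m (cosh x) / legD n m (cosh x) := by
      unfold Qf Pf aF
      rw [mul_div_mul_left]
      have : 0 < sinh x := by linarith
      positivity
    rw [norm_eq_abs]
    refine (abs_sub _ _).trans ?_
    rw [hQP, abs_mul, abs_div, abs_div, abs_of_pos hp.1, abs_of_pos (pow_pos (hPpos x h0) 2)]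
    gcongr
  intro η hη
  have hconst : ∀ x ∈ Set.Ioi (0:ℝ), f x = f η := by
    intro x hx
    exact isOpen_Ioi.is_const_of_deriv_eq_zero isPreconnected_Ioi
      (fun y hy => (hd y hy).differentiableAt.differentiableWithinAt)
      (fun y hy => (hd y hy).deriv) hx hη
  have h0 : f η = 0 := by
    refine tendsto_nhds_unique ?_ hlim
    refine tendsto_const_nhds.congr' ?_
    filter_upwards [eventually_gt_atTop 0] with x hx using (hconst x hx).symm
  have hP := hPpos η hη
  simp only [hf] at h0
  field_simp at h0
  linarith

theorem gam1_eq (n m : ℕ) (hm : m ≤ n) (β : ℝ) {ν φ η : ℝ} (hν : ν ∈ Set.Ioo 0 π) (hη : 0 < η) :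
    gam1 ν φ (Sf n m) (Tf m β) η =
      4*π*kap n m*(Sf n m ν * Tf m β φ) * (Pf1 n m η * Qf n m η + Pf n m η * Qf1 n m η) := by
  have hSc : Continuous (Sf n m) := continuous_iff_continuousAt.2 fun x => (Sf_d n m x).continuousAt
  have hTc : Continuous (Tf m β) := continuous_iff_continuousAt.2 fun x => (Tf_d m β x).continuousAt
  refine (gam_deriv (φ := φ) hν hη hSc hTc).2.unique
    ((((Pf_d n m η).mul (Qf_d n m η hη)).const_mul _).congr_of_eventuallyEq ?_)
  filter_upwards [lt_mem_nhds hη] with x hx using gam_eq n m hm β hν x hx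


theorem sin_of_cos {θ : ℝ} (h : θ ∈ Set.Icc 0 π) : √(1 - cos θ^2) = sin θ := by
  rw [← sin_sq, sqrt_sq (sin_nonneg_of_mem_Icc h)]

theorem sinh_of_cosh {η : ℝ} (h : 0 < η) : √(cosh η^2 - 1) = sinh η := by
  rw [show cosh η^2 - 1 = sinh η^2 by linarith [cosh_sq η], sqrt_sq (sinh_pos_iff.2 h).le]

theorem prolate_eq (a : ℝ) {η θ : ℝ} (t : ℝ) (hη : 0 < η) (hθ : θ ∈ Set.Icc 0 π) :
    prolate a (cosh η) (cos θ) t =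
      !₂[a * sinh η * sin θ * cos t, a * sinh η * sin θ * sin t, a * cosh η * cos θ] := by
  unfold prolate
  rw [sin_of_cos hθ, sinh_of_cosh hη]
  rfl

theorem prolate_deriv (a : ℝ) {η θ : ℝ} (t : ℝ) (hη : 0 < η) (hθ : θ ∈ Set.Icc 0 π) :
    deriv (fun w => prolate a w (cos θ) t) (cosh η) =
      !₂[a * (cosh η / sinh η) * sin θ * cos t, a * (cosh η / sinh η) * sin θ * sin t, a * cos θ] := by
  have hs := sinh_pos_iff.2 hη
  have h1 : HasDerivAt (fun w : ℝ => √(w^2 - 1)) (cosh η / sinh η) (cosh η) := by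
    have := (((hasDerivAt_id (cosh η)).pow 2).sub_const 1).sqrt (by
      simp only [Pi.pow_apply, id]; nlinarith [cosh_sq η])
    refine this.congr_deriv ?_
    simp only [Pi.pow_apply, id]
    rw [sinh_of_cosh hη]; norm_num; field_simp
  apply HasDerivAt.deriv
  suffices key : HasDerivAt (fun w => WithLp.ofLp (prolate a w (cos θ) t))
      (WithLp.ofLp !₂[a * (cosh η / sinh η) * sin θ * cos t, a * (cosh η / sinh η) * sin θ * sin t, a * cos θ])
      (cosh η) by
    exact ((PiLp.continuousLinearEquiv 2 ℝ (fun _ : Fin 3 => ℝ)).symm.hasFDerivAt.comp_hasDerivAt _ key)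
  rw [hasDerivAt_pi]
  intro i
  have hh := sin_of_cos hθ
  fin_cases i
  · simpa [prolate, hh] using ((h1.const_mul a).mul_const (sin θ)).mul_const (cos t)
  · simpa [prolate, hh] using ((h1.const_mul a).mul_const (sin θ)).mul_const (sin t)
  · simpa [prolate, hh] using ((hasDerivAt_id (cosh η)).const_mul a).mul_const (cos θ)

theorem kernel_eq {a : ℝ} (ha : 0 < a) {η θ ν : ℝ} (t φ : ℝ) (hη : 0 < η) (hθ : θ ∈ Set.Icc 0 π)
    (hν : ν ∈ Set.Icc 0 π) :
    ((inner ℝ (unitNormalP a (cosh η) (cos θ) t)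
        (prolate a (cosh η) (cos ν) φ - prolate a (cosh η) (cos θ) t) : ℝ) /
      (4 * π * ‖prolate a (cosh η) (cos ν) φ - prolate a (cosh η) (cos θ) t‖ ^ 3)) *
        areaElemP a (cosh η) (cos θ) =
      sinh η / (8*π) * g1 (rr ν φ η (θ,t)) (4 * sinh η * cosh η * ww ν φ (θ,t)) := by
  have hs := sinh_pos_iff.2 hη
  have hN : 0 < cosh η^2 - cos θ^2 := by nlinarith [cosh_sq η, cos_sq_le_one θ]
  have hNs := sqrt_pos.2 hN
  have c1 := cosh_sq η
  have t1 := sin_sq_add_cos_sq θ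
  have t2 := sin_sq_add_cos_sq ν
  have t3 := sin_sq_add_cos_sq t
  have t4 := sin_sq_add_cos_sq φ
  have n1 : ‖prolate a (cosh η) (cos ν) φ - prolate a (cosh η) (cos θ) t‖ = a * √(rr ν φ η (θ,t)) := by
    rw [prolate_eq a _ hη hθ, prolate_eq a _ hη hν, EuclideanSpace.norm_eq]
    rw [← sqrt_sq ha.le, ← sqrt_mul (sq_nonneg a), sqrt_sq ha.le]
    congr 1
    simp [Fin.sum_univ_three, rr, ww, cos_sub]
    generalize sin θ = A at *
    generalize cos θ = B at *
    generalize sin ν = C at *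
    generalize cos ν = D at *
    generalize sin t = E at *
    generalize cos t = F at *
    generalize sin φ = G at *
    generalize cos φ = H at *
    generalize sinh η = P at *
    generalize cosh η = Q at *
    linear_combination a^2*(D-B)^2*c1 + a^2*P^2*(C^2*t4 + A^2*t3 + t1 + t2)
  have n2 : ‖deriv (fun w => prolate a w (cos θ) t) (cosh η)‖ = a * √(cosh η^2 - cos θ^2) / sinh η := by
    rw [prolate_deriv a _ hη hθ, EuclideanSpace.norm_eq]
    rw [sqrt_eq_iff_mul_self_eq_of_pos (by positivity)]
    simp [Fin.sum_univ_three]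
    have : a * √(cosh η^2 - cos θ^2) / sinh η * (a * √(cosh η^2 - cos θ^2) / sinh η)
      = a^2 * (cosh η^2 - cos θ^2) / sinh η^2 := by
      field_simp; exact sq_sqrt hN.le
    rw [this]
    generalize sin θ = A at *
    generalize cos θ = B at *
    generalize sin t = E at *
    generalize cos t = F at *
    generalize sinh η = P at *
    generalize cosh η = Q at *
    field_simp
    linear_combination -Q^2*A^2*t3 - Q^2*t1 + B^2*c1
  have i1 : inner ℝ (deriv (fun w => prolate a w (cos θ) t) (cosh η))
      (prolate a (cosh η) (cos ν) φ - prolate a (cosh η) (cos θ) t) = - (a^2 * cosh η * ww ν φ (θ,t)) := by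
    rw [prolate_deriv a _ hη hθ, prolate_eq a _ hη hθ, prolate_eq a _ hη hν]
    simp [PiLp.inner_apply, Fin.sum_univ_three, ww, cos_sub]
    generalize sin θ = A at *
    generalize cos θ = B at *
    generalize sin ν = C at *
    generalize cos ν = D at *
    generalize sin t = E at *
    generalize cos t = F at *
    generalize sin φ = G at *
    generalize cos φ = H at *
    generalize sinh η = P at *
    generalize cosh η = Q at *
    field_simp
    linear_combination Q*(-A^2*t3 -t1)
  unfold unitNormalP areaElemP
  rw [real_inner_smul_left, i1, n2, n1, sinh_of_cosh hη]
  unfold g1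
  rcases eq_or_ne (√(rr ν φ η (θ,t))) 0 with h0 | h0
  · simp [h0]
  · field_simp
    ring


theorem sqrt_d {η : ℝ} (hη : 0 < η) :
    HasDerivAt (fun w : ℝ => √(w^2 - 1)) (cosh η / sinh η) (cosh η) := by
  have hs := sinh_pos_iff.2 hη
  have := (((hasDerivAt_id (cosh η)).pow 2).sub_const 1).sqrt (by
    simp only [Pi.pow_apply, id]; nlinarith [cosh_sq η])
  refine this.congr_deriv ?_
  simp only [Pi.pow_apply, id]
  rw [sinh_of_cosh hη]; norm_num; field_simp

theorem assoc_d {q q1 F : ℝ → ℝ} {m : ℕ} {η : ℝ} (hη : 0 < η)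
    (hq : HasDerivAt q (q1 (cosh η)) (cosh η))
    (hF : ∀ x, 1 < x → F x = √(x^2-1)^m * q x) :
    F (cosh η) = aF q sinh cosh m η ∧
    deriv F (cosh η) * sinh η = aF1 q q1 1 sinh cosh m η := by
  have hs := sinh_pos_iff.2 hη
  have h1 := one_lt_cosh.2 hη.ne'
  refine ⟨by rw [hF _ h1, sinh_of_cosh hη]; rfl, ?_⟩
  have hd := ((sqrt_d hη).pow m).mul hq
  have he : F =ᶠ[𝓝 (cosh η)] (fun x => √(x^2-1)^m * q x) := by
    filter_upwards [lt_mem_nhds h1] with x hx using hF x hx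
  have hd2 := HasDerivAt.deriv hd
  rw [he.deriv_eq]
  change deriv (fun x => √(x^2-1)^m * q x) (cosh η) = _ at hd2
  rw [hd2]
  simp only [aF1, Pi.pow_apply]
  rw [sinh_of_cosh hη]
  field_simp
  ring

theorem assocP_d (n m : ℕ) {η : ℝ} (hη : 0 < η) :
    assocP n m (cosh η) = Pf n m η ∧ deriv (assocP n m) (cosh η) * sinh η = Pf1 n m η :=
  assoc_d hη (legD_hasDerivAt n m _) (fun x _ => by rw [assocP, legD_eq])

theorem assocQ_d (n m : ℕ) {η : ℝ} (hη : 0 < η) :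
    assocQ n m (cosh η) = Qf n m η ∧ deriv (assocQ n m) (cosh η) * sinh η = Qf1 n m η :=
  assoc_d hη (legQ_hasDerivAt n m _ (one_lt_cosh.2 hη.ne')) (fun x hx => by rw [assocQ, legQ_eq n m x hx])

/-- change of variables -/
def cv (p : ℝ × ℝ) : ℝ × ℝ := (cos p.1, p.2)
/-- its derivative -/
def cv' (p : ℝ × ℝ) : ℝ × ℝ →L[ℝ] ℝ × ℝ :=
  (ContinuousLinearMap.toSpanSingleton ℝ (-sin p.1)).prodMap (ContinuousLinearMap.id ℝ ℝ)

theorem cv_d (p : ℝ × ℝ) : HasFDerivAt cv (cv' p) p :=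
  HasFDerivAt.prodMap p (hasDerivAt_cos p.1).hasFDerivAt (hasFDerivAt_id p.2)

theorem cv_det (p : ℝ × ℝ) : (cv' p).det = -sin p.1 := by
  have : ((cv' p : ℝ × ℝ →L[ℝ] ℝ × ℝ) : ℝ × ℝ →ₗ[ℝ] ℝ × ℝ) =
    LinearMap.prodMap ((ContinuousLinearMap.toSpanSingleton ℝ (-sin p.1) : ℝ →L[ℝ] ℝ) : ℝ →ₗ[ℝ] ℝ)
      LinearMap.id := rfl
  rw [ContinuousLinearMap.det, this, LinearMap.det_prodMap, LinearMap.det_id, mul_one]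
  simp

theorem cv_inj : Set.InjOn cv boxK := by
  rintro ⟨x, y⟩ ⟨hx, _⟩ ⟨x', y'⟩ ⟨hx', _⟩ h
  simp only [cv, Prod.mk.injEq] at h
  exact Prod.ext (injOn_cos hx hx' h.1) h.2

theorem cv_image : cv '' boxK = Set.Icc (-1:ℝ) 1 ×ˢ Set.Icc (0:ℝ) (2*π) := by
  ext ⟨s, t⟩
  constructor
  · rintro ⟨⟨x, y⟩, ⟨hx, hy⟩, h⟩
    simp only [cv, Prod.mk.injEq] at h
    exact ⟨by rw [← h.1]; exact ⟨neg_one_le_cos _, cos_le_one _⟩, by rw [← h.2]; exact hy⟩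
  · rintro ⟨hs, ht⟩
    exact ⟨(arccos s, t), ⟨⟨arccos_nonneg _, arccos_le_pi _⟩, ht⟩, by
      simp [cv, cos_arccos hs.1 hs.2]⟩

theorem cv_integral (g : ℝ × ℝ → ℂ) :
    (IntegrableOn g (Set.Icc (-1:ℝ) 1 ×ˢ Set.Icc (0:ℝ) (2*π)) ↔
      IntegrableOn (fun p => (sin p.1 : ℂ) * g (cv p)) boxK) ∧
    ∫ p in Set.Icc (-1:ℝ) 1 ×ˢ Set.Icc (0:ℝ) (2*π), g p = ∫ p in boxK, (sin p.1 : ℂ) * g (cv p) := by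
  have hm := boxK_compact.measurableSet
  have he : ∀ p ∈ boxK, |(cv' p).det| • g (cv p) = (sin p.1 : ℂ) * g (cv p) := by
    intro p hp
    rw [cv_det, abs_neg, abs_of_nonneg (sin_nonneg_of_mem_Icc hp.1), Complex.real_smul, Complex.ofReal_sin]
  rw [← cv_image, integrableOn_image_iff_integrableOn_abs_det_fderiv_smul volume hm
    (fun x _ => (cv_d x).hasFDerivWithinAt) cv_inj g,
    integral_image_eq_integral_abs_det_fderiv_smul volume hm
    (fun x _ => (cv_d x).hasFDerivWithinAt) cv_inj g]
  exact ⟨integrableOn_congr_fun he hm, setIntegral_congr_fun hm he⟩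

theorem exp_Tf (m : ℕ) (t : ℝ) :
    Complex.exp (Complex.I * m * t) = (Tf m 0 t : ℂ) + Complex.I * (Tf m (-(π/2)) t : ℂ) := by
  have h : Tf m (-(π/2)) t = sin (m*t) := by rw [Tf, ← sub_eq_add_neg, cos_sub_pi_div_two]
  rw [h, Tf, add_zero, show Complex.I * m * t = ((m*t:ℝ):ℂ) * Complex.I by push_cast; ring,
    Complex.exp_mul_I]
  push_cast; ring

theorem sphY_eq (n m : ℕ) {θ : ℝ} (t : ℝ) (hθ : θ ∈ Set.Icc 0 π) : sphY n m (cos θ) t =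
    ((√((2 * (n : ℝ) + 1) / (4 * π)) * √(((n - m).factorial : ℝ) / ((n + m).factorial : ℝ)) : ℝ) : ℂ)
      * (Sf n m θ : ℂ) * ((Tf m 0 t : ℂ) + Complex.I * (Tf m (-(π/2)) t : ℂ)) := by
  rw [sphY, exp_Tf, ferrersP, sin_of_cos hθ, legD_eq]
  simp only [Sf, aF]; push_cast; ring

theorem main_aux (a : ℝ) (ha : 0 < a) {η ν : ℝ} (hη : 0 < η) (hν : ν ∈ Set.Ioo 0 π)
    (n m : ℕ) (hm : m ≤ n) (φ : ℝ) (g : ℝ × ℝ → ℂ)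
    (hg : g = fun p : ℝ × ℝ =>
        ((((inner ℝ (unitNormalP a (cosh η) p.1 p.2)
            (prolate a (cosh η) (cos ν) φ - prolate a (cosh η) p.1 p.2) : ℝ) /
            (4 * Real.pi * ‖prolate a (cosh η) (cos ν) φ - prolate a (cosh η) p.1 p.2‖ ^ 3)) *
              areaElemP a (cosh η) p.1 : ℝ) : ℂ) * sphY n m p.1 p.2) :
    IntegrableOn g (Set.Icc (-1 : ℝ) 1 ×ˢ Set.Icc (0 : ℝ) (2 * Real.pi)) volume ∧
    ∫ p in Set.Icc (-1:ℝ) 1 ×ˢ Set.Icc (0:ℝ) (2*π), g p =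
      ((kap n m * (sinh η) * (1/2) * (Pf1 n m η * Qf n m η + Pf n m η * Qf1 n m η) : ℝ) : ℂ)
        * sphY n m (cos ν) φ := by
  have hSc : Continuous (Sf n m) := continuous_iff_continuousAt.2 fun x => (Sf_d n m x).continuousAt
  have hTc : ∀ β, Continuous (Tf m β) :=
    fun β => continuous_iff_continuousAt.2 fun x => (Tf_d m β x).continuousAt
  have hbm := boxK_compact.measurableSet
  set N : ℝ := √((2 * (n : ℝ) + 1) / (4 * π)) * √(((n - m).factorial : ℝ) / ((n + m).factorial : ℝ))
    with hN
  set A : ℝ → ℝ × ℝ → ℝ := fun β p => sin p.1 * Sf n m p.1 * Tf m β p.2 *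
      g1 (rr ν φ η p) (4 * sinh η * cosh η * ww ν φ p) with hA
  have hAi : ∀ β, IntegrableOn (A β) boxK := fun β => (gam_deriv (φ := φ) hν hη hSc (hTc β)).1
  have hAv : ∀ β, ∫ p in boxK, A β p = 4*π*kap n m*(Sf n m ν * Tf m β φ) *
      (Pf1 n m η * Qf n m η + Pf n m η * Qf1 n m η) := fun β => gam1_eq n m hm β hν hη
  have he : ∀ p ∈ boxK, (sin p.1 : ℂ) * g (cv p) =
      ((sinh η / (8*π) * N : ℝ) : ℂ) * ((A 0 p : ℂ) + Complex.I * (A (-(π/2)) p : ℂ)) := by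
    intro p hp
    have hk := kernel_eq ha p.2 φ hη hp.1 ⟨hν.1.le, hν.2.le⟩
    rw [hg]
    simp only [cv]
    rw [hk, sphY_eq n m p.2 hp.1, ← hN]
    simp only [hA, Prod.mk.eta]
    push_cast; ring
  have i0 : Integrable (fun p => (A 0 p : ℂ)) (volume.restrict boxK) := (hAi 0).ofReal
  have i1 : Integrable (fun p => Complex.I * (A (-(π/2)) p : ℂ)) (volume.restrict boxK) :=
    ((hAi (-(π/2))).ofReal).const_mul _
  obtain ⟨c1, c2⟩ := cv_integral g
  refine ⟨c1.2 ?_, ?_⟩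
  · rw [integrableOn_congr_fun he hbm]
    exact (i0.add i1).const_mul _
  · rw [c2, setIntegral_congr_fun hbm he, integral_const_mul, integral_add i0 i1,
      integral_const_mul, integral_complex_ofReal, integral_complex_ofReal, hAv, hAv,
      sphY_eq n m φ ⟨hν.1.le, hν.2.le⟩, ← hN]
    have : (π:ℂ) ≠ 0 := by exact_mod_cast pi_ne_zero
    push_cast
    field_simp
    ring

theorem doubleLayer_on_surface_eval (a : ℝ) (ha : 0 < a) (u₀ : ℝ) (hu₀ : 1 < u₀)
    (n m : ℕ) (hm : m ≤ n) (v φ : ℝ) (hv : v ∈ Set.Ioo (-1 : ℝ) 1) :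
    IntegrableOn
      (fun p : ℝ × ℝ =>
        ((((inner ℝ (unitNormalP a u₀ p.1 p.2) (prolate a u₀ v φ - prolate a u₀ p.1 p.2) : ℝ) /
            (4 * Real.pi * ‖prolate a u₀ v φ - prolate a u₀ p.1 p.2‖ ^ 3)) *
              areaElemP a u₀ p.1 : ℝ) : ℂ) * sphY n m p.1 p.2)
      (Set.Icc (-1 : ℝ) 1 ×ˢ Set.Icc (0 : ℝ) (2 * Real.pi)) volume ∧
    doubleLayerP a u₀ (fun s t => sphY n m s t) (prolate a u₀ v φ) =
      (((((n - m).factorial : ℝ) / ((n + m).factorial : ℝ)) * (-1 : ℝ) ^ m * (u₀ ^ 2 - 1) *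
          (1 / 2) * (deriv (assocP n m) u₀ * assocQ n m u₀ +
            deriv (assocQ n m) u₀ * assocP n m u₀) : ℝ) : ℂ) * sphY n m v φ := by
  obtain ⟨η, hη, rfl⟩ : ∃ η, 0 < η ∧ cosh η = u₀ :=
    ⟨arcosh u₀, arcosh_pos hu₀, cosh_arcosh hu₀.le⟩
  obtain ⟨ν, hν, rfl⟩ : ∃ ν, ν ∈ Set.Ioo 0 π ∧ cos ν = v :=
    ⟨arccos v, ⟨arccos_pos.2 hv.2, arccos_lt_pi.2 hv.1⟩, cos_arccos hv.1.le hv.2.le⟩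
  obtain ⟨h1, h2⟩ := main_aux a ha hη hν n m hm φ _ rfl
  refine ⟨h1, ?_⟩
  have e : ((kap n m * (sinh η) * (1/2) * (Pf1 n m η * Qf n m η + Pf n m η * Qf1 n m η) : ℝ) : ℂ) =
    (((((n - m).factorial : ℝ) / ((n + m).factorial : ℝ)) * (-1 : ℝ) ^ m * (cosh η ^ 2 - 1) *
          (1 / 2) * (deriv (assocP n m) (cosh η) * assocQ n m (cosh η) +
            deriv (assocQ n m) (cosh η) * assocP n m (cosh η)) : ℝ) : ℂ) := by
    congr 1
    rw [← (assocP_d n m hη).2, ← (assocQ_d n m hη).2, (assocP_d n m hη).1, (assocQ_d n m hη).1,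
      show cosh η^2 - 1 = sinh η^2 by linarith [cosh_sq η], kap]
    ring
  rw [← e, ← h2]
  unfold doubleLayerP
  rw [intervalIntegral.integral_of_le (by positivity), ← integral_Icc_eq_integral_Ioc]
  simp_rw [intervalIntegral.integral_of_le (show (-1:ℝ) ≤ 1 by norm_num),
    ← integral_Icc_eq_integral_Ioc]
  unfold IntegrableOn at h1
  rw [Measure.volume_eq_prod, ← Measure.prod_restrict] at h1 ⊢
  rw [integral_prod_symm _ h1]
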